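/- arXiv:0802.0039 — 7 statements merged into one kernel-verified Lean document; each statement's English description precedes it below -/
import Mathlib

section
/- (Volume conjecture for the figure-eight knot, Ekholm.) The sequence a_N := Σ_{k=0}^{N-1} Π_{j=1}^{k} (2 sin(πj/N))², which equals the N-colored Jones polynomial J_N(E; e^{2πi/N}) of the figure-eight knot E evaluated at the N-th root of unity, satisfies lim_{N→∞} (log a_N)/N = (1/π) · Σ_{k=1}^{∞} sin(kπ/3)/k². (Equivalently, 2π · lim_{N→∞} (log a_N)/N equals the hyperbolic volume 2 Im Li₂(e^{iπ/3}) of the figure-eight knot complement.) -/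
/-!
Write `P(N, k) = ∏_{j=1}^k 2 sin (πj/N)`, so that `a_N = Σ_{k<N} P(N, k)²`. The Clausen function
`Cl₂(θ) = Im Li₂(e^{iθ})` satisfies `Cl₂'(θ) = -log |1 - e^{iθ}| = -log (2 sin (θ/2))` on `(0, 2π)`:
this is clear for `Im Li₂(r e^{iθ})` with `r < 1`, and survives the limit `r → 1⁻`.

Since `log (2 sin (θ/2))` is concave, its integral over an interval of length `2π/N` is at most
`2π/N` times its value at the midpoint. Summing over the intervals centred at `2πj/N` gives
`log P(N, k) ≥ (N/2π) (Cl₂(π/N) - Cl₂((2k+1)π/N))`; sampling at midpoints keeps the intervals away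
from the logarithmic singularities at `0` and `2π`. The identity `P(N, k) P(N, N-1-k) = N` turns the
same inequality into the upper bound `log P(N, k) ≤ log N + (N/2π) (max Cl₂ - Cl₂(π/N))`, and
`max Cl₂ = Cl₂(π/3) = -Cl₂(5π/3)`. The number `a_N` lies between its summand with `k = ⌊5N/6⌋` and
`N` times its largest summand, so both bounds lead to `(log a_N)/N → Cl₂(π/3)/π`.
-/

open scoped Real BigOperators

/-- Kashaev invariant of the figure-eight knot:
`a N = J_N(E; e^{2πi/N}) = Σ_{k=0}^{N-1} Π_{j=1}^{k} (2 sin(πj/N))²`. -/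
noncomputable def fig8Kashaev (N : ℕ) : ℝ :=
  ∑ k ∈ Finset.range N, ∏ j ∈ Finset.Icc 1 k,
    (2 * Real.sin (Real.pi * (j : ℝ) / (N : ℝ))) ^ 2

open Filter Topology Set

lemma log_sum_le_log_card_add {ι : Type*} {s : Finset ι} (hs : s.Nonempty) {f : ι → ℝ} {b : ℝ}
    (hpos : ∀ i ∈ s, 0 < f i) (hb : ∀ i ∈ s, Real.log (f i) ≤ b) :
    Real.log (∑ i ∈ s, f i) ≤ Real.log s.card + b := by
  have hcard : (s.card : ℝ) ≠ 0 := Nat.cast_ne_zero.2 hs.card_ne_zero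
  have hsum : ∑ i ∈ s, f i ≤ s.card * Real.exp b := by
    rw [← nsmul_eq_mul]
    exact Finset.sum_le_card_nsmul _ _ _ fun i hi =>
      (Real.log_le_iff_le_exp (hpos i hi)).1 (hb i hi)
  calc Real.log (∑ i ∈ s, f i) ≤ Real.log (s.card * Real.exp b) :=
        Real.log_le_log (Finset.sum_pos hpos hs) hsum
    _ = Real.log s.card + b := by rw [Real.log_mul hcard (Real.exp_ne_zero b), Real.log_exp]

lemma tendstoUniformlyOnFilter_of_continuousAt_uncurry {α β γ : Type*} [TopologicalSpace α]
    [TopologicalSpace β] [UniformSpace γ] {G : α → β → γ} {a : α} {x : β}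
    (hG : ContinuousAt (Function.uncurry G) (a, x)) :
    TendstoUniformlyOnFilter G (G a) (𝓝 a) (𝓝 x) := by
  have hGa : ContinuousAt (fun p : α × β => G a p.2) (a, x) :=
    ContinuousAt.comp (g := Function.uncurry G) (f := fun p : α × β => (a, p.2)) hG (by fun_prop)
  rw [tendstoUniformlyOnFilter_iff_tendsto, ← nhds_prod_eq]
  exact (hGa.prodMk hG).tendsto.mono_right (nhds_le_uniformity _)

/-! ### Concave functions -/

lemma concaveOn_log_comp {E : Type*} [AddCommMonoid E] [Module ℝ E] {s : Set E} {g : E → ℝ}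
    (hg : ConcaveOn ℝ s g) (hpos : ∀ x ∈ s, 0 < g x) :
    ConcaveOn ℝ s fun x => Real.log (g x) := by
  refine ⟨hg.1, fun x hx y hy a b ha hb hab => ?_⟩
  have hmean : 0 < a • g x + b • g y :=
    convex_Ioi (0 : ℝ) (hpos x hx) (hpos y hy) ha hb hab
  exact (strictConcaveOn_log_Ioi.concaveOn.2 (hpos x hx) (hpos y hy) ha hb hab).trans
    (Real.log_le_log hmean (hg.2 hx hy ha hb hab))

section Concave

variable {S : Set ℝ} {f F : ℝ → ℝ}

lemma isMaxOn_of_concaveOn_of_hasDerivAt_zero {x : ℝ} (hf : ConcaveOn ℝ S f) (hx : x ∈ S)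
    (hfx : HasDerivAt f 0 x) : IsMaxOn f S x := by
  intro y hy
  rcases lt_trichotomy x y with hxy | rfl | hyx
  · have hslope := hf.slope_le_of_hasDerivAt hx hy hxy hfx
    rw [slope_def_field, div_le_iff₀ (sub_pos.2 hxy), zero_mul] at hslope
    exact sub_nonpos.1 hslope
  · exact le_refl (f x)
  · have hslope := hf.le_slope_of_hasDerivAt hy hx hyx hfx
    rw [slope_def_field, le_div_iff₀ (sub_pos.2 hyx), zero_mul] at hslope
    exact sub_nonneg.1 hslope

lemma sub_le_mul_midpoint_of_concaveOn_deriv (hF : ∀ x ∈ S, HasDerivAt F (f x) x)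
    (hf : ConcaveOn ℝ S f) {x h : ℝ} (hh : 0 ≤ h) (hl : x - h ∈ S) (hr : x + h ∈ S) :
    F (x + h) - F (x - h) ≤ 2 * h * f x := by
  rcases hh.eq_or_lt with rfl | hh
  · simp
  have hmem : ∀ t ∈ Icc 0 h, x + t ∈ S ∧ x - t ∈ S := fun t ht =>
    ⟨hf.1.ordConnected.out hl hr ⟨by linarith [ht.1], by linarith [ht.2]⟩,
      hf.1.ordConnected.out hl hr ⟨by linarith [ht.2], by linarith [ht.1]⟩⟩
  have hderiv : ∀ t ∈ Icc 0 h,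
      HasDerivAt (fun t => F (x + t) - F (x - t)) (f (x + t) + f (x - t)) t := fun t ht => by
    simpa using ((hF _ (hmem t ht).1).comp_const_add x t).fun_sub
      ((hF _ (hmem t ht).2).comp_const_sub x t)
  obtain ⟨c, hc, hslope⟩ := exists_hasDerivAt_eq_slope _ _ hh
    (fun t ht => (hderiv t ht).continuousAt.continuousWithinAt)
    (fun t ht => hderiv t (Ioo_subset_Icc_self ht))
  have hconcave : f (x + c) + f (x - c) ≤ 2 * f x := by
    obtain ⟨hadd, hsub⟩ := hmem c (Ioo_subset_Icc_self hc)
    have := hf.2 hadd hsub one_half_pos.le one_half_pos.le (add_halves 1)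
    simp only [smul_eq_mul] at this
    rw [show 1 / 2 * (x + c) + 1 / 2 * (x - c) = x by ring] at this
    linarith
  rw [eq_div_iff (by linarith)] at hslope
  simp only [add_zero, sub_zero, sub_self] at hslope
  nlinarith

lemma sub_le_sum_midpoint_of_concaveOn_deriv (hF : ∀ x ∈ S, HasDerivAt F (f x) x)
    (hf : ConcaveOn ℝ S f) {a h : ℝ} (hh : 0 ≤ h) (k : ℕ) (ha : a ∈ S) (hb : a + k * h ∈ S) :
    F (a + k * h) - F a ≤ ∑ i ∈ Finset.range k, h * f (a + (i + 1 / 2) * h) := by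
  have node_mem : ∀ i ≤ k, a + i * h ∈ S := fun i hi =>
    hf.1.ordConnected.out ha hb ⟨le_add_of_nonneg_right (by positivity), by gcongr⟩
  calc F (a + k * h) - F a
      = ∑ i ∈ Finset.range k, (F (a + (i + 1 : ℕ) * h) - F (a + i * h)) := by
        rw [Finset.sum_range_sub (fun i : ℕ => F (a + i * h))]
        simp
    _ ≤ ∑ i ∈ Finset.range k, h * f (a + (i + 1 / 2) * h) := by
        refine Finset.sum_le_sum fun i hi => ?_
        have hleft : a + (i + 1 / 2) * h - h / 2 = a + i * h := by ring
        have hright : a + (i + 1 / 2) * h + h / 2 = a + (i + 1 : ℕ) * h := by push_cast; ring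
        have hmid := sub_le_mul_midpoint_of_concaveOn_deriv hF hf (div_nonneg hh zero_le_two)
          (hleft ▸ node_mem i (Finset.mem_range.1 hi).le)
          (hright ▸ node_mem (i + 1) (Finset.mem_range.1 hi))
        rwa [hleft, hright, mul_div_cancel₀ h two_ne_zero] at hmid

end Concave

/-! ### The dilogarithm on the closed unit disc -/

/-- The dilogarithm `Li₂(z) = Σ_{n≥1} zⁿ/n²` on the closed unit disc; the term `n = 0` of the series
below vanishes because of the convention `x / 0 = 0`. -/
noncomputable def dilog (z : ℂ) : ℂ := ∑' n : ℕ, z ^ n / (n : ℂ) ^ 2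

lemma norm_dilog_term_le {z : ℂ} (hz : ‖z‖ ≤ 1) (n : ℕ) :
    ‖z ^ n / (n : ℂ) ^ 2‖ ≤ 1 / (n : ℝ) ^ 2 := by
  rw [norm_div, norm_pow, norm_pow, Complex.norm_natCast]
  gcongr
  exact pow_le_one₀ (norm_nonneg z) hz

lemma hasSum_dilog {z : ℂ} (hz : ‖z‖ ≤ 1) :
    HasSum (fun n : ℕ => z ^ n / (n : ℂ) ^ 2) (dilog z) :=
  (Summable.of_norm_bounded (Real.summable_one_div_nat_pow.2 one_lt_two)
    (norm_dilog_term_le hz)).hasSum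

lemma continuousOn_dilog : ContinuousOn dilog (Metric.closedBall 0 1) :=
  continuousOn_tsum (fun n => by fun_prop) (Real.summable_one_div_nat_pow.2 one_lt_two)
    fun n _ hz => norm_dilog_term_le (mem_closedBall_zero_iff.1 hz) n

lemma hasDerivAt_dilog_circleMap {r : ℝ} (hr : |r| < 1) (θ : ℝ) :
    HasDerivAt (fun θ => dilog (circleMap 0 r θ))
      (-Complex.log (1 - circleMap 0 r θ) * Complex.I) θ := by
  have hnorm (θ : ℝ) : ‖circleMap 0 r θ‖ = |r| := norm_circleMap_zero r θ
  have hterm : ∀ (n : ℕ) (θ : ℝ), HasDerivAt (fun θ => circleMap 0 r θ ^ n / (n : ℂ) ^ 2)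
      (circleMap 0 r θ ^ n / n * Complex.I) θ := by
    intro n θ
    refine (((hasDerivAt_circleMap 0 r θ).pow n).div_const _).congr_deriv ?_
    rcases n with _ | n
    · simp
    · have : ((n : ℂ) + 1) ≠ 0 := Nat.cast_add_one_ne_zero n
      push_cast
      field_simp
      simp [pow_succ]
  have hbound : ∀ (n : ℕ) (θ : ℝ), ‖circleMap 0 r θ ^ n / n * Complex.I‖ ≤ |r| ^ n := by
    intro n θ
    rw [norm_mul, Complex.norm_I, mul_one, norm_div, norm_pow, hnorm, Complex.norm_natCast]
    rcases n with _ | n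
    · simp
    · exact div_le_self (by positivity) (by simp)
  have hderiv := hasDerivAt_tsum (summable_geometric_of_lt_one (abs_nonneg r) hr) hterm hbound
    (hasSum_dilog ((hnorm 0).trans_le hr.le)).summable θ
  rwa [tsum_mul_right, (Complex.hasSum_taylorSeries_neg_log ((hnorm θ).trans_lt hr)).tsum_eq]
    at hderiv

lemma hasDerivAt_im_dilog_circleMap {r : ℝ} (hr : |r| < 1) (θ : ℝ) :
    HasDerivAt (fun θ => (dilog (circleMap 0 r θ)).im) (-Real.log ‖1 - circleMap 0 r θ‖) θ := by
  simpa [Complex.mul_im, Complex.log_re, Function.comp_def] using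
    Complex.imCLM.hasFDerivAt.comp_hasDerivAt θ (hasDerivAt_dilog_circleMap hr θ)

/-! ### The Clausen function -/

/-- The Clausen function `Cl₂(θ) = Im Li₂(e^{iθ}) = Σ_{n≥1} sin(nθ)/n²`; the hyperbolic volume of
the figure-eight knot complement is `2 Cl₂(π/3)`. -/
noncomputable def clausen (θ : ℝ) : ℝ := (dilog (circleMap 0 1 θ)).im

lemma hasSum_clausen (θ : ℝ) :
    HasSum (fun n : ℕ => Real.sin (n * θ) / (n : ℝ) ^ 2) (clausen θ) := by
  have h := Complex.hasSum_im (hasSum_dilog (z := circleMap 0 1 θ) (by simp))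
  simpa only [clausen, circleMap_zero_pow, one_pow, circleMap_zero_im, one_mul,
    ← Complex.ofReal_natCast, ← Complex.ofReal_pow, Complex.div_ofReal_im] using h

lemma continuous_clausen : Continuous clausen :=
  Complex.continuous_im.comp <| continuousOn_dilog.comp_continuous (continuous_circleMap 0 1)
    fun θ => circleMap_mem_closedBall 0 zero_le_one θ

lemma clausen_periodic : Function.Periodic clausen (2 * π) := fun θ => by
  rw [clausen, clausen, periodic_circleMap 0 1 θ]

lemma clausen_neg (θ : ℝ) : clausen (-θ) = -clausen θ := by
  refine (hasSum_clausen (-θ)).unique ?_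
  simpa [neg_div] using (hasSum_clausen θ).neg

lemma clausen_two_pi_sub (θ : ℝ) : clausen (2 * π - θ) = -clausen θ := by
  rw [clausen_periodic.sub_eq', clausen_neg]

lemma clausen_zero : clausen 0 = 0 := by
  have := clausen_neg 0
  rw [neg_zero] at this
  linarith

lemma clausen_pi : clausen π = 0 := by
  have := clausen_two_pi_sub π
  rw [two_mul, add_sub_cancel_right] at this
  linarith

lemma norm_one_sub_circleMap {θ : ℝ} (hθ : θ ∈ Icc 0 (2 * π)) :
    ‖1 - circleMap 0 1 θ‖ = 2 * Real.sin (θ / 2) := by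
  have hsin : 0 ≤ Real.sin (θ / 2) :=
    Real.sin_nonneg_of_nonneg_of_le_pi (by linarith [hθ.1]) (by linarith [hθ.2])
  rw [norm_sub_rev, circleMap_zero, Complex.ofReal_one, one_mul, mul_comm,
    Complex.norm_exp_I_mul_ofReal_sub_one, Real.norm_of_nonneg (by positivity)]

lemma sin_half_pos {θ : ℝ} (hθ : θ ∈ Ioo 0 (2 * π)) : 0 < Real.sin (θ / 2) :=
  Real.sin_pos_of_pos_of_lt_pi (by linarith [hθ.1]) (by linarith [hθ.2])

lemma hasDerivAt_clausen {θ : ℝ} (hθ : θ ∈ Ioo 0 (2 * π)) :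
    HasDerivAt clausen (-Real.log (2 * Real.sin (θ / 2))) θ := by
  have hnorm : ‖1 - circleMap 0 1 θ‖ = 2 * Real.sin (θ / 2) :=
    norm_one_sub_circleMap (Ioo_subset_Icc_self hθ)
  rw [← hnorm]
  refine hasDerivAt_of_tendstoUniformlyOnFilter (l := 𝓝[<] (1 : ℝ))
    (f := fun r θ => (dilog (circleMap 0 r θ)).im)
    (f' := fun r θ => -Real.log ‖1 - circleMap 0 r θ‖)
    (g' := fun θ => -Real.log ‖1 - circleMap 0 1 θ‖) ?_ ?_ ?_
  · have hcont : ContinuousAt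
        (Function.uncurry fun r θ : ℝ => -Real.log ‖1 - circleMap 0 r θ‖) (1, θ) := by
      refine (ContinuousAt.log (f := fun p : ℝ × ℝ => ‖1 - circleMap 0 p.1 p.2‖)
        (by fun_prop) ?_).neg
      rw [hnorm]
      exact (mul_pos two_pos (sin_half_pos hθ)).ne'
    exact (tendstoUniformlyOnFilter_of_continuousAt_uncurry hcont).mono_left nhdsWithin_le_nhds
  · have habs : ∀ᶠ r : ℝ in 𝓝[<] 1, |r| < 1 := by
      filter_upwards [Ioo_mem_nhdsLT (by norm_num : (-1 : ℝ) < 1)] with r hr using abs_lt.2 hr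
    filter_upwards [habs.prod_inl (𝓝 θ)] with p hp using hasDerivAt_im_dilog_circleMap hp p.2
  · refine Eventually.of_forall fun φ => ?_
    have hradial : ContinuousOn (fun r : ℝ => (dilog (circleMap 0 r φ)).im) (Icc 0 1) := by
      refine Complex.continuous_im.comp_continuousOn (continuousOn_dilog.comp ?_ ?_)
      · fun_prop
      · intro r hr
        simpa [abs_of_nonneg hr.1] using hr.2
    have hIcc : Icc 0 1 ∈ 𝓝[<] (1 : ℝ) :=
      mem_of_superset (Ioo_mem_nhdsLT zero_lt_one) Ioo_subset_Icc_self
    exact (hradial 1 (right_mem_Icc.2 zero_le_one)).tendsto.mono_left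
      (nhdsWithin_le_of_mem hIcc)

lemma concaveOn_log_two_mul_sin_half :
    ConcaveOn ℝ (Ioo 0 (2 * π)) fun θ => Real.log (2 * Real.sin (θ / 2)) := by
  have hhalf : ∀ θ ∈ Ioo 0 (2 * π), θ / 2 ∈ Icc 0 π := fun θ hθ =>
    ⟨by linarith [hθ.1], by linarith [hθ.2]⟩
  have hsin : ConcaveOn ℝ (Ioo 0 (2 * π)) fun θ => Real.sin (θ / 2) := by
    refine ⟨convex_Ioo _ _, fun x hx y hy a b ha hb hab => ?_⟩
    simpa only [smul_eq_mul, add_div, mul_div_assoc] using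
      strictConcaveOn_sin_Icc.concaveOn.2 (hhalf x hx) (hhalf y hy) ha hb hab
  exact concaveOn_log_comp (hsin.smul zero_le_two)
    fun θ hθ => mul_pos two_pos (sin_half_pos hθ)

lemma concaveOn_clausen : ConcaveOn ℝ (Icc 0 π) clausen := by
  have hsub : Ioo 0 π ⊆ Ioo 0 (2 * π) := Ioo_subset_Ioo_right (by linarith [Real.pi_pos])
  refine AntitoneOn.concaveOn_of_deriv (convex_Icc 0 π) continuous_clausen.continuousOn ?_ ?_ <;>
    rw [interior_Icc]
  · exact fun θ hθ => (hasDerivAt_clausen (hsub hθ)).differentiableAt.differentiableWithinAt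
  · intro θ hθ φ hφ hle
    rw [(hasDerivAt_clausen (hsub hθ)).deriv, (hasDerivAt_clausen (hsub hφ)).deriv, neg_le_neg_iff]
    have hsin : Real.sin (θ / 2) ≤ Real.sin (φ / 2) :=
      Real.sin_le_sin_of_le_of_le_pi_div_two (by linarith [hθ.1, Real.pi_pos])
        (by linarith [hφ.2]) (by linarith)
    have hpos := sin_half_pos (hsub hθ)
    gcongr

lemma clausen_nonneg {θ : ℝ} (hθ : θ ∈ Icc 0 π) : 0 ≤ clausen θ := by
  have := concaveOn_clausen.min_le_of_mem_Icc (left_mem_Icc.2 Real.pi_pos.le)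
    (right_mem_Icc.2 Real.pi_pos.le) hθ
  rwa [clausen_zero, clausen_pi, min_self] at this

lemma clausen_le_clausen_pi_div_three (θ : ℝ) : clausen θ ≤ clausen (π / 3) := by
  have hpi := Real.pi_pos
  have hmem : π / 3 ∈ Icc 0 π := ⟨by linarith, by linarith⟩
  obtain ⟨φ, ⟨hφ0, hφ⟩, hθφ⟩ := clausen_periodic.exists_mem_Ico₀ Real.two_pi_pos θ
  rw [hθφ]
  rcases le_total φ π with h | h
  · have hderiv : HasDerivAt clausen 0 (π / 3) := by
      refine (hasDerivAt_clausen ⟨by linarith, by linarith⟩).congr_deriv ?_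
      rw [div_div, show (3 : ℝ) * 2 = 6 by norm_num, Real.sin_pi_div_six]
      norm_num
    exact isMaxOn_of_concaveOn_of_hasDerivAt_zero concaveOn_clausen hmem hderiv ⟨hφ0, h⟩
  · have hreflect := clausen_nonneg (θ := 2 * π - φ) ⟨by linarith, by linarith⟩
    rw [clausen_two_pi_sub] at hreflect
    exact (neg_nonneg.1 hreflect).trans (clausen_nonneg hmem)

/-! ### Products of sines -/

/-- The product `∏_{j=1}^k 2 sin(πj/N)`, with the index shifted to start at `0`. -/
noncomputable def sinProd (N k : ℕ) : ℝ :=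
  ∏ j ∈ Finset.range k, 2 * Real.sin (π * (j + 1) / N)

lemma sinProd_factor_pos {N j : ℕ} (hj : j + 1 < N) : 0 < 2 * Real.sin (π * (j + 1) / N) := by
  have hN : (0 : ℝ) < N := by exact_mod_cast (by omega : 0 < N)
  have hjN : (j + 1 : ℝ) < N := by exact_mod_cast hj
  refine mul_pos two_pos (Real.sin_pos_of_pos_of_lt_pi (by positivity) ?_)
  rw [div_lt_iff₀ hN]
  gcongr

lemma sinProd_pos {N k : ℕ} (hk : k < N) : 0 < sinProd N k :=
  Finset.prod_pos fun j hj => sinProd_factor_pos (by rw [Finset.mem_range] at hj; omega)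

lemma sinProd_succ_self (n : ℕ) : sinProd (n + 1) n = n + 1 := by
  have hroot (j : ℕ) : Complex.exp (2 * π * Complex.I / (n + 1 : ℕ)) ^ (j + 1)
      = circleMap 0 1 (2 * π * (j + 1) / (n + 1)) := by
    rw [circleMap_zero, Complex.ofReal_one, one_mul, ← Complex.exp_nat_mul]
    congr 1
    push_cast
    ring
  have hfactor : ∀ j ∈ Finset.range n, ‖1 - circleMap 0 1 (2 * π * (j + 1) / (n + 1))‖
      = 2 * Real.sin (π * (j + 1) / (n + 1 : ℕ)) := by
    intro j hj
    have hjn : (j : ℝ) ≤ n := by exact_mod_cast (Finset.mem_range.1 hj).le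
    rw [norm_one_sub_circleMap ⟨by positivity, by rw [div_le_iff₀ (by positivity)]; gcongr⟩]
    push_cast
    ring_nf
  have hprod := congrArg norm
    (Complex.isPrimitiveRoot_exp (n + 1) n.succ_ne_zero).prod_one_sub_pow_eq_order
  simp only [hroot, norm_prod] at hprod
  rw [Finset.prod_congr rfl hfactor] at hprod
  exact hprod.trans (by exact_mod_cast Complex.norm_natCast (n + 1))

lemma sinProd_mul_sinProd (k m : ℕ) :
    sinProd (k + m + 1) k * sinProd (k + m + 1) m = k + m + 1 := by
  have hfull := sinProd_succ_self (k + m)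
  rw [sinProd, Finset.prod_range_add, ← Finset.prod_range_reflect _ m] at hfull
  push_cast at hfull
  rw [← hfull, sinProd, sinProd]
  push_cast
  congr 1
  refine Finset.prod_congr rfl fun j hj => ?_
  have hcast : ((m - 1 - j : ℕ) : ℝ) = m - (j + 1) := by
    rw [Nat.sub_sub, add_comm 1 j, Nat.cast_sub (Finset.mem_range.1 hj)]
    push_cast
    rfl
  rw [hcast, ← Real.sin_pi_sub]
  congr 2
  field_simp
  ring

lemma le_log_sinProd {N k : ℕ} (hk : k < N) :
    N / (2 * π) * (clausen (π / N) - clausen ((2 * k + 1) * π / N)) ≤ Real.log (sinProd N k) := by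
  have hN : (0 : ℝ) < N := by exact_mod_cast (by omega : 0 < N)
  have hkN : (2 * k + 1 : ℝ) < 2 * N := by exact_mod_cast (by omega : 2 * k + 1 < 2 * N)
  have hend : π / N + k * (2 * π / N) = (2 * k + 1) * π / N := by ring
  have hleft : π / N ∈ Ioo 0 (2 * π) := by
    refine ⟨by positivity, (div_lt_iff₀ hN).2 ?_⟩
    nlinarith [Real.pi_pos]
  have hright : (2 * k + 1) * π / N ∈ Ioo 0 (2 * π) := by
    refine ⟨by positivity, (div_lt_iff₀ hN).2 ?_⟩
    nlinarith [Real.pi_pos]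
  have hsum := sub_le_sum_midpoint_of_concaveOn_deriv (F := fun θ => -clausen θ)
    (fun θ hθ => by simpa using (hasDerivAt_clausen hθ).fun_neg) concaveOn_log_two_mul_sin_half
    (by positivity : 0 ≤ 2 * π / N) k hleft (hend ▸ hright)
  have hnode (i : ℕ) : (π / N + (i + 1 / 2) * (2 * π / N)) / 2 = π * (i + 1) / N := by ring
  have hlog : Real.log (sinProd N k)
      = ∑ i ∈ Finset.range k, Real.log (2 * Real.sin (π * (i + 1) / N)) :=
    Real.log_prod fun i hi => (sinProd_factor_pos (by rw [Finset.mem_range] at hi; omega)).ne'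
  simp only [hend, hnode, ← Finset.mul_sum, ← hlog] at hsum
  rw [div_mul_eq_mul_div, div_le_iff₀ (by positivity)]
  rw [div_mul_eq_mul_div, le_div_iff₀ hN] at hsum
  linarith

lemma log_sinProd_le {N k : ℕ} (hk : k < N) :
    Real.log (sinProd N k)
      ≤ Real.log N + N / (2 * π) * (clausen (π / 3) - clausen (π / N)) := by
  obtain ⟨m, rfl⟩ : ∃ m, N = k + m + 1 := ⟨N - k - 1, by omega⟩
  have hm : m < k + m + 1 := by omega
  have hreflect : Real.log (sinProd (k + m + 1) k) + Real.log (sinProd (k + m + 1) m)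
      = Real.log (k + m + 1 : ℕ) := by
    rw [← Real.log_mul (sinProd_pos hk).ne' (sinProd_pos hm).ne', sinProd_mul_sinProd]
    push_cast
    rfl
  have hlower := le_log_sinProd hm
  have hmax := mul_le_mul_of_nonneg_left
    (clausen_le_clausen_pi_div_three ((2 * m + 1) * π / (k + m + 1 : ℕ)))
    (by positivity : 0 ≤ ((k + m + 1 : ℕ) : ℝ) / (2 * π))
  linarith

/-! ### Growth of the Kashaev invariant -/

lemma fig8Kashaev_eq_sum_sinProd_sq (N : ℕ) :
    fig8Kashaev N = ∑ k ∈ Finset.range N, sinProd N k ^ 2 := by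
  refine Finset.sum_congr rfl fun k _ => ?_
  have hshift := Finset.prod_Ico_add' (fun j : ℕ => 2 * Real.sin (π * j / N)) 0 k 1
  push_cast at hshift
  rw [Finset.prod_pow, sinProd, Finset.range_eq_Ico, hshift,
    Finset.Ico_add_one_right_eq_Icc]

lemma le_log_fig8Kashaev_div {N k : ℕ} (hk : k < N) :
    1 / π * (clausen (π / N) - clausen ((2 * k + 1) * π / N)) ≤ Real.log (fig8Kashaev N) / N := by
  have hN : (0 : ℝ) < N := by exact_mod_cast (by omega : 0 < N)
  have hterm : sinProd N k ^ 2 ≤ fig8Kashaev N := by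
    rw [fig8Kashaev_eq_sum_sinProd_sq]
    exact Finset.single_le_sum (f := fun k => sinProd N k ^ 2) (fun _ _ => sq_nonneg _)
      (Finset.mem_range.2 hk)
  rw [le_div_iff₀ hN]
  calc 1 / π * (clausen (π / N) - clausen ((2 * k + 1) * π / N)) * N
      = 2 * (N / (2 * π) * (clausen (π / N) - clausen ((2 * k + 1) * π / N))) := by
        field_simp
    _ ≤ 2 * Real.log (sinProd N k) := by gcongr; exact le_log_sinProd hk
    _ = Real.log (sinProd N k ^ 2) := by rw [Real.log_pow, Nat.cast_two]
    _ ≤ Real.log (fig8Kashaev N) := Real.log_le_log (pow_pos (sinProd_pos hk) 2) hterm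

lemma log_fig8Kashaev_div_le {N : ℕ} (hN : 0 < N) :
    Real.log (fig8Kashaev N) / N
      ≤ 3 * (Real.log N / N) + 1 / π * (clausen (π / 3) - clausen (π / N)) := by
  set b := Real.log N + N / (2 * π) * (clausen (π / 3) - clausen (π / N)) with hb
  have hlog : Real.log (fig8Kashaev N) ≤ Real.log N + 2 * b := by
    rw [fig8Kashaev_eq_sum_sinProd_sq]
    refine (log_sum_le_log_card_add ⟨0, Finset.mem_range.2 hN⟩
      (fun k hk => pow_pos (sinProd_pos (Finset.mem_range.1 hk)) 2) fun k hk => ?_).trans_eq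
      (by rw [Finset.card_range])
    rw [Real.log_pow, Nat.cast_two]
    gcongr
    exact log_sinProd_le (Finset.mem_range.1 hk)
  have hN' : (0 : ℝ) < N := by exact_mod_cast hN
  rw [div_le_iff₀ hN']
  refine hlog.trans_eq ?_
  rw [hb]
  field_simp
  ring

lemma tendsto_clausen_pi_div_natCast : Tendsto (fun N : ℕ => clausen (π / N)) atTop (𝓝 0) := by
  have := (continuous_clausen.tendsto 0).comp (tendsto_const_div_atTop_nhds_zero_nat π)
  rwa [clausen_zero] at this

lemma tendsto_floor_mul_add_half_mul_two_pi_div {c : ℝ} (hc : 0 ≤ c) :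
    Tendsto (fun N : ℕ => (2 * (⌊c * N⌋₊ : ℝ) + 1) * π / N) atTop (𝓝 (2 * π * c)) := by
  have hfloor : Tendsto (fun N : ℕ => (⌊c * N⌋₊ : ℝ) / N) atTop (𝓝 c) :=
    (tendsto_nat_floor_mul_div_atTop hc).comp tendsto_natCast_atTop_atTop
  have := (hfloor.const_mul (2 * π)).add (tendsto_const_div_atTop_nhds_zero_nat π)
  rw [add_zero] at this
  exact this.congr fun N => by ring

lemma tsum_sin_succ_mul_pi_div_three :
    ∑' k : ℕ, Real.sin ((k + 1 : ℝ) * Real.pi / 3) / ((k + 1 : ℝ) ^ 2) = clausen (π / 3) := by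
  have h := (hasSum_nat_add_iff' 1).2 (hasSum_clausen (π / 3))
  simpa [mul_div_assoc] using h.tsum_eq

/-- Volume conjecture for the figure-eight knot (Ekholm):
`lim_{N→∞} (log a_N)/N = (1/π) Σ_{k≥1} sin(kπ/3)/k²`. -/
theorem volume_conjecture_figure_eight :
    Filter.Tendsto (fun N : ℕ => Real.log (fig8Kashaev N) / (N : ℝ))
      Filter.atTop
      (nhds ((1 / Real.pi) *
        ∑' k : ℕ, Real.sin ((k + 1 : ℝ) * Real.pi / 3) / ((k + 1 : ℝ) ^ 2))) := by
  rw [tsum_sin_succ_mul_pi_div_three]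
  have hlog : Tendsto (fun N : ℕ => Real.log N / N) atTop (𝓝 0) :=
    Real.isLittleO_log_id_atTop.tendsto_div_nhds_zero.comp tendsto_natCast_atTop_atTop
  have hupper := (hlog.const_mul 3).add
    ((tendsto_clausen_pi_div_natCast.const_sub (clausen (π / 3))).const_mul (1 / π))
  have hnode := tendsto_floor_mul_add_half_mul_two_pi_div (c := 5 / 6) (by norm_num)
  have hlower := (tendsto_clausen_pi_div_natCast.sub
    ((continuous_clausen.tendsto _).comp hnode)).const_mul (1 / π)
  rw [show 2 * π * (5 / 6) = 2 * π - π / 3 by ring, clausen_two_pi_sub, zero_sub, neg_neg] at hlower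
  rw [mul_zero, zero_add, sub_zero] at hupper
  refine tendsto_of_tendsto_of_tendsto_of_le_of_le' hlower hupper ?_ ?_ <;>
    filter_upwards [eventually_gt_atTop 0] with N hN
  · have hN' : (0 : ℝ) < N := Nat.cast_pos.2 hN
    exact le_log_fig8Kashaev_div ((Nat.floor_lt (by positivity)).2 (by linarith))
  · exact log_fig8Kashaev_div_le hN
end

section
/- Let θ be a real number with θ ≥ log((3+√5)/2) (i.e. θ ≥ arccosh(3/2)). Set φ̃(θ) := log(cosh θ − 1/2 + √((cosh θ − 1/2)² − 1)) (so cosh φ̃(θ) = cosh θ − 1/2 and 0 ≤ φ̃(θ) < θ), and H̃(θ) := Li₂(e^{−φ̃(θ)−θ}) − Li₂(e^{φ̃(θ)−θ}) + θ·φ̃(θ). Then the colored Jones polynomials of the figure-eight knot E satisfy θ · lim_{N→∞} (log J_N(E; e^{θ/N}))/N = H̃(θ), where J_N(E; e^{θ/N}) is a positive real number. In particular, when θ = log((3+√5)/2) one has H̃(θ) = 0 and the limit is 0. -/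
/-!
By the identity `(e^a - e^{-a}) (e^b - e^{-b}) = 2 cosh (a + b) - 2 cosh (a - b)`, the `j`-th factor
of the product is `2 cosh θ - 2 cosh (j h)` with `h = θ / N`. Writing `f u` for
`log (2 cosh θ - 2 cosh u)`, the `k`-th summand is therefore the exponential of `h⁻¹` times a
Riemann sum of `f` over `[0, k h]`, and `h log J_N` is governed by the maximum of `∫₀ᵘ f` over
`u ∈ [0, θ)`. As `f` is antitone there, the maximum is attained at the zero of `f`, where
`cosh u = cosh θ - 1/2`. Finally `2 cosh θ - 2 cosh u = e^θ (1 - e^{u-θ}) (1 - e^{-u-θ})` and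
`Li₂' x = -log (1 - x) / x` express the integral through dilogarithms.
-/

open scoped Real BigOperators

/-- The `N`-colored Jones polynomial of the figure-eight knot evaluated at `q = e^{θ/N}`,
for a real parameter `θ` (a positive real number for `θ > 0`). -/
noncomputable def fig8JonesReal (N : ℕ) (θ : ℝ) : ℝ :=
  ∑ k ∈ Finset.range N, ∏ j ∈ Finset.Icc 1 k,
    ((Real.exp (((N : ℝ) - j) * θ / (2 * N)) - Real.exp (-(((N : ℝ) - j) * θ) / (2 * N))) *
     (Real.exp (((N : ℝ) + j) * θ / (2 * N)) - Real.exp (-(((N : ℝ) + j) * θ) / (2 * N))))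

/-- Real dilogarithm `Li₂(x) = Σ_{k≥1} x^k/k²`. -/
noncomputable def Li2Real (x : ℝ) : ℝ := ∑' k : ℕ, x ^ (k + 1) / ((k + 1 : ℝ) ^ 2)

/-- `φ̃(θ) = arccosh(cosh θ − 1/2)`, the usual positive branch. -/
noncomputable def phiTilde (θ : ℝ) : ℝ :=
  Real.log (Real.cosh θ - 1 / 2 + Real.sqrt ((Real.cosh θ - 1 / 2) ^ 2 - 1))

/-- `H̃(θ) = Li₂(e^{−φ̃(θ)−θ}) − Li₂(e^{φ̃(θ)−θ}) + θ·φ̃(θ)`. -/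
noncomputable def HTilde (θ : ℝ) : ℝ :=
  Li2Real (Real.exp (-phiTilde θ - θ)) - Li2Real (Real.exp (phiTilde θ - θ)) +
    θ * phiTilde θ

section Laplace

open Set Filter Topology
open MeasureTheory (volume)

variable {f : ℝ → ℝ} {a b h : ℝ}

theorem antitoneOn_comp_mul_right {x y : ℝ} (hh : 0 ≤ h) (hf : AntitoneOn f (Icc (x * h) (y * h))) :
    AntitoneOn (fun t ↦ f (t * h)) (Icc x y) :=
  hf.comp_MonotoneOn ((monotone_mul_right_of_nonneg hh).monotoneOn _) fun _ ht ↦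
    ⟨mul_le_mul_of_nonneg_right ht.1 hh, mul_le_mul_of_nonneg_right ht.2 hh⟩

theorem mul_sum_Ioc_le_integral_of_antitoneOn {m n : ℕ} (hmn : m ≤ n) (hh : 0 ≤ h)
    (hf : AntitoneOn f (Icc (m * h) (n * h))) :
    h * ∑ j ∈ Finset.Ioc m n, f (j * h) ≤ ∫ u in m * h..n * h, f u := by
  rw [← intervalIntegral.mul_integral_comp_mul_right, ← Finset.Ico_add_one_add_one_eq_Ioc,
    ← Finset.sum_Ico_add' (fun j : ℕ ↦ f (j * h))]
  gcongr
  exact (antitoneOn_comp_mul_right hh hf).sum_le_integral_Ico hmn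

theorem integral_le_mul_sum_Ico_of_antitoneOn {m n : ℕ} (hmn : m ≤ n) (hh : 0 ≤ h)
    (hf : AntitoneOn f (Icc (m * h) (n * h))) :
    ∫ u in m * h..n * h, f u ≤ h * ∑ j ∈ Finset.Ico m n, f (j * h) := by
  rw [← intervalIntegral.mul_integral_comp_mul_right]
  gcongr
  exact (antitoneOn_comp_mul_right hh hf).integral_le_sum_Ico hmn

theorem intervalIntegrable_of_antitoneOn_Ico (hf : AntitoneOn f (Ico a b)) {x y : ℝ}
    (hx : x ∈ Ico a b) (hy : y ∈ Ico a b) : IntervalIntegrable f volume x y :=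
  (hf.mono (ordConnected_Ico.uIcc_subset hx hy)).intervalIntegrable

theorem isMaxOn_integral_of_antitoneOn {c : ℝ} (hf : AntitoneOn f (Ico a b)) (hc : c ∈ Ico a b)
    (hfc : f c = 0) : IsMaxOn (fun u ↦ ∫ t in a..u, f t) (Ico a b) c := by
  intro u hu
  have ha : a ∈ Ico a b := ⟨le_rfl, hc.1.trans_lt hc.2⟩
  have hsplit := intervalIntegral.integral_interval_sub_left
    (intervalIntegrable_of_antitoneOn_Ico hf ha hc) (intervalIntegrable_of_antitoneOn_Ico hf ha hu)
  rw [mem_ofPred_eq, ← sub_nonneg, hsplit]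
  rcases le_total u c with huc | hcu
  · refine intervalIntegral.integral_nonneg huc fun t ht ↦ ?_
    exact hfc ▸ hf ⟨hu.1.trans ht.1, ht.2.trans_lt hc.2⟩ hc ht.2
  · rw [intervalIntegral.integral_symm, ← intervalIntegral.integral_neg]
    refine intervalIntegral.integral_nonneg hcu fun t ht ↦ neg_nonneg.mpr ?_
    exact hfc ▸ hf hc ⟨hc.1.trans ht.1, ht.2.trans_lt hu.2⟩ ht.1

theorem continuousWithinAt_integral_of_antitoneOn {c : ℝ} (hf : AntitoneOn f (Ico a b))
    (hc : c ∈ Ico a b) : ContinuousWithinAt (fun u ↦ ∫ t in a..u, f t) (Ici a) c := by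
  obtain ⟨d, hcd, hdb⟩ := exists_between hc.2
  have had : a ≤ d := hc.1.trans hcd.le
  have hint := intervalIntegrable_of_antitoneOn_Ico hf ⟨le_rfl, had.trans_lt hdb⟩ ⟨had, hdb⟩
  have hcont : ContinuousOn (fun u ↦ ∫ t in a..u, f t) (Icc a d) :=
    uIcc_of_le had ▸ intervalIntegral.continuousOn_primitive_interval' hint left_mem_uIcc
  exact (hcont c ⟨hc.1, hcd.le⟩).mono_of_mem_nhdsWithin <|
    inter_mem self_mem_nhdsWithin (mem_nhdsWithin_of_mem_nhds (Iic_mem_nhds hcd))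

theorem tendsto_floor_div_add_one_mul {x : ℝ} (hx : 0 ≤ x) :
    Tendsto (fun h : ℝ ↦ ((⌊x / h⌋₊ + 1 : ℕ) : ℝ) * h) (𝓝[>] 0) (𝓝 x) := by
  have hfloor := (tendsto_nat_floor_mul_div_atTop hx).comp tendsto_inv_nhdsGT_zero
  have hh : Tendsto (fun h : ℝ ↦ h) (𝓝[>] 0) (𝓝 0) := nhdsWithin_le_nhds
  refine (add_zero x ▸ hfloor.add hh).congr fun h ↦ ?_
  simp only [Function.comp_apply, div_inv_eq_mul, ← div_eq_mul_inv]
  push_cast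
  ring

/-- The sum of the exponentials of the partial sums of the samples `f h, f (2 h), f (3 h), …`: the
model for `fig8JonesReal`, to which Laplace's method applies. -/
noncomputable def expPartialSums (f : ℝ → ℝ) (h : ℝ) (N : ℕ) : ℝ :=
  ∑ k ∈ Finset.range N, Real.exp (∑ j ∈ Finset.Icc 1 k, f (j * h))

theorem mul_log_expPartialSums_le {N : ℕ} {M : ℝ} (hN : 0 < N) (hh : 0 < h)
    (hM : ∀ k < N, h * ∑ j ∈ Finset.Icc 1 k, f (j * h) ≤ M) :
    h * Real.log (expPartialSums f h N) ≤ M + h * Real.log N := by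
  have hpos : 0 < expPartialSums f h N :=
    Finset.sum_pos (fun _ _ ↦ Real.exp_pos _) ⟨0, Finset.mem_range.mpr hN⟩
  have hle : expPartialSums f h N ≤ N * Real.exp (M / h) := by
    have hterm : ∀ k ∈ Finset.range N,
        Real.exp (∑ j ∈ Finset.Icc 1 k, f (j * h)) ≤ Real.exp (M / h) := fun k hk ↦ by
      rw [Real.exp_le_exp, le_div_iff₀' hh]
      exact hM k (Finset.mem_range.mp hk)
    simpa only [expPartialSums, Finset.card_range, nsmul_eq_mul] using
      Finset.sum_le_card_nsmul _ _ _ hterm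
  calc h * Real.log (expPartialSums f h N)
      ≤ h * Real.log (N * Real.exp (M / h)) := by gcongr
    _ = h * (Real.log N + M / h) := by
      rw [Real.log_mul (by positivity) (Real.exp_ne_zero _), Real.log_exp]
    _ = M + h * Real.log N := by field_simp; ring

theorem le_mul_log_expPartialSums {N k : ℕ} (hk : k < N) (hh : 0 ≤ h) :
    h * ∑ j ∈ Finset.Icc 1 k, f (j * h) ≤ h * Real.log (expPartialSums f h N) := by
  gcongr
  rw [← Real.log_exp (∑ j ∈ Finset.Icc 1 k, f (j * h))]
  refine Real.log_le_log (Real.exp_pos _) ?_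
  exact Finset.single_le_sum (f := fun k : ℕ ↦ Real.exp (∑ j ∈ Finset.Icc 1 k, f (j * h)))
    (fun _ _ ↦ (Real.exp_pos _).le) (Finset.mem_range.mpr hk)

theorem mul_log_expPartialSums_le_of_isMaxOn {c : ℝ} {N : ℕ} (hN : 0 < N) (hb : 0 < b)
    (hf : AntitoneOn f (Ico 0 b)) (hmax : IsMaxOn (fun u ↦ ∫ t in 0..u, f t) (Ico 0 b) c) :
    b / N * Real.log (expPartialSums f (b / N) N) ≤
      (∫ t in 0..c, f t) + b / N * Real.log N := by
  refine mul_log_expPartialSums_le hN (by positivity) fun k hk ↦ ?_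
  have hkb : k * (b / N) < b := by
    calc k * (b / N) < N * (b / N) := by gcongr
      _ = b := by field_simp
  have hsum := mul_sum_Ioc_le_integral_of_antitoneOn (h := b / N) k.zero_le (by positivity)
    (hf.mono fun x hx ↦ ⟨le_trans (by positivity) hx.1, hx.2.trans_lt hkb⟩)
  rw [← Finset.Icc_add_one_left_eq_Ioc, Nat.cast_zero, zero_mul] at hsum
  exact hsum.trans (hmax ⟨by positivity, hkb⟩)

theorem integral_le_mul_log_expPartialSums {N k : ℕ} (hh : 0 ≤ h) (hk : k < N)
    (hkb : (k + 1 : ℕ) * h < b) (hf : AntitoneOn f (Ico 0 b)) :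
    ∫ t in h..(k + 1 : ℕ) * h, f t ≤ h * Real.log (expPartialSums f h N) := by
  have hsum := integral_le_mul_sum_Ico_of_antitoneOn (m := 1) (n := k + 1) (by lia) hh
    (hf.mono fun x hx ↦ ⟨le_trans (by positivity) hx.1, hx.2.trans_lt hkb⟩)
  rw [Finset.Ico_add_one_right_eq_Icc, Nat.cast_one, one_mul] at hsum
  exact hsum.trans (le_mul_log_expPartialSums hk hh)

theorem tendsto_integral_floor_div_add_one_mul {c : ℝ} (hf : AntitoneOn f (Ico 0 b))
    (hc : c ∈ Ico 0 b) :
    Tendsto (fun h : ℝ ↦ ∫ t in h..(⌊c / h⌋₊ + 1 : ℕ) * h, f t) (𝓝[>] 0)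
      (𝓝 (∫ t in 0..c, f t)) := by
  have h0 : (0 : ℝ) ∈ Ico 0 b := ⟨le_rfl, hc.1.trans_lt hc.2⟩
  have hpos : ∀ᶠ h : ℝ in 𝓝[>] 0, 0 < h := eventually_mem_nhdsWithin
  have hlt : ∀ᶠ h : ℝ in 𝓝[>] 0, h < b := nhdsWithin_le_nhds (eventually_lt_nhds h0.2)
  have hpoint := tendsto_floor_div_add_one_mul hc.1
  have hupper := (continuousWithinAt_integral_of_antitoneOn hf hc).tendsto.comp <|
    tendsto_nhdsWithin_iff.mpr ⟨hpoint, hpos.mono fun h hh ↦ by simp only [mem_Ici]; positivity⟩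
  have hlower := (continuousWithinAt_integral_of_antitoneOn hf h0).tendsto.mono_left <|
    nhdsWithin_mono 0 Ioi_subset_Ici_self
  have hsub := hupper.sub hlower
  rw [intervalIntegral.integral_same, sub_zero] at hsub
  refine hsub.congr' ?_
  filter_upwards [hpos, hlt, hpoint.eventually_lt_const hc.2] with h hh hhb hkb
  exact intervalIntegral.integral_interval_sub_left
    (intervalIntegrable_of_antitoneOn_Ico hf h0 ⟨by positivity, hkb⟩)
    (intervalIntegrable_of_antitoneOn_Ico hf h0 ⟨hh.le, hhb⟩)

/-- Laplace's method: on the scale `h = b / N` the largest summand dominates, and its partial sum is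
a Riemann sum. -/
theorem tendsto_mul_log_expPartialSums {c : ℝ} (hf : AntitoneOn f (Ico 0 b)) (hc : c ∈ Ico 0 b)
    (hmax : IsMaxOn (fun u ↦ ∫ t in 0..u, f t) (Ico 0 b) c) :
    Tendsto (fun N : ℕ ↦ b / N * Real.log (expPartialSums f (b / N) N)) atTop
      (𝓝 (∫ t in 0..c, f t)) := by
  have hb : 0 < b := hc.1.trans_lt hc.2
  have hpos : ∀ᶠ N : ℕ in atTop, 0 < N := eventually_gt_atTop 0
  have hstep : Tendsto (fun N : ℕ ↦ b / N) atTop (𝓝[>] 0) :=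
    tendsto_nhdsWithin_iff.mpr ⟨tendsto_const_div_atTop_nhds_zero_nat b,
      hpos.mono fun N hN ↦ by simp only [mem_Ioi]; positivity⟩
  have hlog : Tendsto (fun N : ℕ ↦ b / N * Real.log N) atTop (𝓝 0) := by
    have hdiv := Real.isLittleO_log_id_atTop.tendsto_div_nhds_zero.comp tendsto_natCast_atTop_atTop
    refine (mul_zero b ▸ hdiv.const_mul b).congr fun N ↦ ?_
    simp only [Function.comp_apply, id_eq]
    ring
  refine tendsto_of_tendsto_of_tendsto_of_le_of_le'
    ((tendsto_integral_floor_div_add_one_mul hf hc).comp hstep)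
    (add_zero (∫ t in 0..c, f t) ▸ hlog.const_add _) ?_ ?_
  · filter_upwards [hpos, hstep.eventually
      ((tendsto_floor_div_add_one_mul hc.1).eventually_lt_const hc.2)] with N hN hkb
    have hkN : (⌊c / (b / N)⌋₊ + 1 : ℕ) * (b / N) < N * (b / N) := by
      rwa [mul_div_cancel₀ b (by positivity)]
    have hk : ⌊c / (b / N)⌋₊ + 1 < N := by
      exact_mod_cast lt_of_mul_lt_mul_right hkN (by positivity)
    exact integral_le_mul_log_expPartialSums (by positivity) (by lia) hkb hf
  · filter_upwards [hpos] with N hN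
    exact mul_log_expPartialSums_le_of_isMaxOn hN hb hf hmax

end Laplace

theorem hasDerivAt_Li2Real {x : ℝ} (hx : |x| < 1) :
    HasDerivAt Li2Real (∑' k : ℕ, x ^ k / ((k : ℝ) + 1)) x := by
  obtain ⟨r, hxr, hr1⟩ := exists_between hx
  have hr0 : 0 < r := (abs_nonneg x).trans_lt hxr
  refine hasDerivAt_tsum_of_isPreconnected (u := fun k ↦ r ^ k) (t := Set.Ioo (-r) r) (y₀ := 0)
    (g := fun (k : ℕ) y ↦ y ^ (k + 1) / ((k + 1 : ℝ) ^ 2))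
    (g' := fun (k : ℕ) y ↦ y ^ k / ((k : ℝ) + 1))
    (summable_geometric_of_lt_one hr0.le hr1) isOpen_Ioo isPreconnected_Ioo
    (fun k y _ ↦ ?_) (fun k y hy ↦ ?_) ⟨neg_lt_zero.mpr hr0, hr0⟩ (by simp) (abs_lt.mp hxr)
  · refine ((hasDerivAt_pow (k + 1) y).div_const ((k + 1 : ℝ) ^ 2)).congr_deriv ?_
    rw [Nat.cast_add_one, add_tsub_cancel_right]
    field_simp
  · have hk : (1 : ℝ) ≤ ‖(k : ℝ) + 1‖ := by
      rw [Real.norm_of_nonneg (by positivity)]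
      exact le_add_of_nonneg_left k.cast_nonneg
    calc ‖y ^ k / ((k : ℝ) + 1)‖
        ≤ ‖y ^ k‖ := by rw [norm_div]; exact div_le_self (norm_nonneg _) hk
      _ = |y| ^ k := by rw [norm_pow, Real.norm_eq_abs]
      _ ≤ r ^ k := by gcongr; exact (abs_lt.mpr hy).le

theorem tsum_pow_div_add_one {x : ℝ} (hx : |x| < 1) (hx0 : x ≠ 0) :
    ∑' k : ℕ, x ^ k / ((k : ℝ) + 1) = -Real.log (1 - x) / x := by
  rw [← ((Real.hasSum_pow_div_log_of_abs_lt_one hx).div_const x).tsum_eq]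
  refine tsum_congr fun k ↦ ?_
  rw [pow_succ]
  field_simp

theorem hasDerivAt_Li2Real_exp {y : ℝ} (hy : y < 0) :
    HasDerivAt (fun y ↦ Li2Real (Real.exp y)) (-Real.log (1 - Real.exp y)) y := by
  have habs : |Real.exp y| < 1 := by rwa [Real.abs_exp, Real.exp_lt_one_iff]
  have hLi := hasDerivAt_Li2Real habs
  rw [tsum_pow_div_add_one habs (Real.exp_ne_zero y)] at hLi
  exact (hLi.comp y (Real.hasDerivAt_exp y)).congr_deriv (div_mul_cancel₀ _ (Real.exp_ne_zero y))

section Factors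

variable {θ u : ℝ}

theorem exp_sub_exp_neg_mul_exp_sub_exp_neg (a b : ℝ) :
    (Real.exp a - Real.exp (-a)) * (Real.exp b - Real.exp (-b)) =
      2 * Real.cosh (a + b) - 2 * Real.cosh (a - b) := by
  rw [Real.cosh_add, Real.cosh_sub, Real.sinh_eq, Real.sinh_eq]
  ring

theorem two_cosh_sub_two_cosh (θ u : ℝ) :
    2 * Real.cosh θ - 2 * Real.cosh u =
      Real.exp θ * ((1 - Real.exp (u - θ)) * (1 - Real.exp (-u - θ))) := by
  simp only [Real.cosh_eq, Real.exp_sub, Real.exp_neg]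
  field_simp
  ring

/-- The logarithm of a factor of the colored Jones polynomial, in the variable `u = j θ / N`;
meaningful for `|u| < |θ|`, where the argument of the logarithm is positive. -/
noncomputable def fig8LogFactor (θ u : ℝ) : ℝ := Real.log (2 * Real.cosh θ - 2 * Real.cosh u)

theorem fig8LogFactor_eq (hu : |u| < θ) :
    fig8LogFactor θ u =
      θ + Real.log (1 - Real.exp (u - θ)) + Real.log (1 - Real.exp (-u - θ)) := by
  obtain ⟨hneg, hpos⟩ := abs_lt.mp hu
  have hplus : 1 - Real.exp (u - θ) ≠ 0 :=
    sub_ne_zero.mpr (Real.exp_lt_one_iff.mpr (by linarith)).ne'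
  have hminus : 1 - Real.exp (-u - θ) ≠ 0 :=
    sub_ne_zero.mpr (Real.exp_lt_one_iff.mpr (by linarith)).ne'
  rw [fig8LogFactor, two_cosh_sub_two_cosh,
    Real.log_mul (Real.exp_ne_zero θ) (mul_ne_zero hplus hminus), Real.log_mul hplus hminus,
    Real.log_exp, add_assoc]

theorem exp_fig8LogFactor (hu : |u| < |θ|) :
    Real.exp (fig8LogFactor θ u) = 2 * Real.cosh θ - 2 * Real.cosh u :=
  Real.exp_log (by linarith [Real.cosh_lt_cosh.mpr hu])

theorem antitoneOn_fig8LogFactor (θ : ℝ) : AntitoneOn (fig8LogFactor θ) (Set.Ico 0 θ) := by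
  intro u hu v hv huv
  have huv' : Real.cosh u ≤ Real.cosh v :=
    Real.cosh_le_cosh.mpr (by rwa [abs_of_nonneg hu.1, abs_of_nonneg hv.1])
  have hvθ : Real.cosh v < Real.cosh θ :=
    Real.cosh_lt_cosh.mpr ((abs_of_nonneg hv.1).trans_lt (hv.2.trans_le (le_abs_self θ)))
  exact Real.log_le_log (by linarith) (by linarith)

theorem integral_fig8LogFactor (hu : u ∈ Set.Ico 0 θ) :
    ∫ t in 0..u, fig8LogFactor θ t =
      Li2Real (Real.exp (-u - θ)) - Li2Real (Real.exp (u - θ)) + θ * u := by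
  have hderiv : ∀ t ∈ Set.uIcc 0 u, HasDerivAt
      (fun t ↦ Li2Real (Real.exp (-t - θ)) - Li2Real (Real.exp (t - θ)) + θ * t)
      (fig8LogFactor θ t) t := by
    intro t ht
    rw [Set.uIcc_of_le hu.1] at ht
    have htθ : |t| < θ := by rw [abs_of_nonneg ht.1]; exact ht.2.trans_lt hu.2
    obtain ⟨hneg, hpos⟩ := abs_lt.mp htθ
    have hminus := (hasDerivAt_Li2Real_exp (y := -t - θ) (by linarith)).comp t
      ((hasDerivAt_neg t).sub_const θ)
    have hplus := (hasDerivAt_Li2Real_exp (y := t - θ) (by linarith)).comp t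
      ((hasDerivAt_id t).sub_const θ)
    refine ((hminus.sub hplus).add ((hasDerivAt_id t).const_mul θ)).congr_deriv ?_
    rw [fig8LogFactor_eq htθ]
    ring
  rw [intervalIntegral.integral_eq_sub_of_hasDerivAt hderiv
    (intervalIntegrable_of_antitoneOn_Ico (antitoneOn_fig8LogFactor θ)
      ⟨le_rfl, hu.1.trans_lt hu.2⟩ hu)]
  simp

theorem fig8JonesReal_factor_eq {N : ℕ} (hN : N ≠ 0) (θ : ℝ) (j : ℕ) :
    (Real.exp (((N : ℝ) - j) * θ / (2 * N)) - Real.exp (-(((N : ℝ) - j) * θ) / (2 * N))) *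
      (Real.exp (((N : ℝ) + j) * θ / (2 * N)) - Real.exp (-(((N : ℝ) + j) * θ) / (2 * N))) =
      2 * Real.cosh θ - 2 * Real.cosh (j * (θ / N)) := by
  have hadd : ((N : ℝ) - j) * θ / (2 * N) + ((N : ℝ) + j) * θ / (2 * N) = θ := by
    field_simp; ring
  have hsub : ((N : ℝ) - j) * θ / (2 * N) - ((N : ℝ) + j) * θ / (2 * N) = -(j * (θ / N)) := by
    field_simp; ring
  rw [neg_div, neg_div, exp_sub_exp_neg_mul_exp_sub_exp_neg, hadd, hsub, Real.cosh_neg]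

theorem fig8JonesReal_eq_expPartialSums (N : ℕ) (hθ : θ ≠ 0) :
    fig8JonesReal N θ = expPartialSums (fig8LogFactor θ) (θ / N) N := by
  refine Finset.sum_congr rfl fun k hk ↦ ?_
  rw [Real.exp_sum]
  refine Finset.prod_congr rfl fun j hj ↦ ?_
  have hjN : j < N := (Finset.mem_Icc.mp hj).2.trans_lt (Finset.mem_range.mp hk)
  have hjθ : |j * (θ / N)| < |θ| := by
    rw [mul_div_left_comm, abs_mul, abs_of_nonneg (by positivity : (0 : ℝ) ≤ j / N)]
    refine mul_lt_of_lt_one_right (abs_pos.mpr hθ) ?_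
    exact (div_lt_one (by exact_mod_cast j.zero_le.trans_lt hjN)).mpr (by exact_mod_cast hjN)
  rw [fig8JonesReal_factor_eq (Nat.ne_zero_of_lt hjN), exp_fig8LogFactor hjθ]

end Factors

section CriticalPoint

variable {θ : ℝ}

theorem log_three_add_sqrt_five_div_two : Real.log ((3 + √5) / 2) = Real.arcosh (3 / 2) := by
  have hsqrt : √((3 / 2) ^ 2 - 1) = √5 / 2 := by
    rw [show (3 / 2 : ℝ) ^ 2 - 1 = 5 / 2 ^ 2 by norm_num, Real.sqrt_div (by norm_num),
      Real.sqrt_sq (by norm_num)]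
  rw [Real.arcosh, hsqrt, add_div]

theorem phiTilde_eq_arcosh (θ : ℝ) : phiTilde θ = Real.arcosh (Real.cosh θ - 1 / 2) := rfl

theorem cosh_phiTilde (hθ : 3 / 2 ≤ Real.cosh θ) :
    Real.cosh (phiTilde θ) = Real.cosh θ - 1 / 2 :=
  Real.cosh_arcosh (by linarith)

theorem phiTilde_nonneg (hθ : 3 / 2 ≤ Real.cosh θ) : 0 ≤ phiTilde θ :=
  Real.arcosh_nonneg (by linarith)

theorem phiTilde_lt_abs (hθ : 3 / 2 ≤ Real.cosh θ) : phiTilde θ < |θ| := by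
  refine (le_abs_self _).trans_lt (Real.cosh_lt_cosh.mp ?_)
  rw [cosh_phiTilde hθ]
  linarith

theorem fig8LogFactor_phiTilde (hθ : 3 / 2 ≤ Real.cosh θ) : fig8LogFactor θ (phiTilde θ) = 0 := by
  have hone : 2 * Real.cosh θ - 2 * (Real.cosh θ - 1 / 2) = 1 := by ring
  rw [fig8LogFactor, cosh_phiTilde hθ, hone, Real.log_one]

theorem HTilde_eq_zero (hθ : Real.cosh θ = 3 / 2) : HTilde θ = 0 := by
  have hphi : phiTilde θ = 0 := by
    rw [phiTilde_eq_arcosh, hθ, Real.arcosh_eq_zero_iff (by norm_num)]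
    norm_num
  simp [HTilde, hphi]

end CriticalPoint

/-- Asymptotics of the colored Jones polynomials of the figure-eight knot for real
`θ ≥ arccosh(3/2) = log((3+√5)/2)`:
`θ · lim_{N→∞} (log J_N(E; e^{θ/N}))/N = H̃(θ)`; in particular the limit vanishes at
`θ = log((3+√5)/2)` since `H̃` vanishes there. -/
theorem fig8_real_theta_asymptotics (θ : ℝ)
    (hθ : Real.log ((3 + Real.sqrt 5) / 2) ≤ θ) :
    Filter.Tendsto (fun N : ℕ => θ * (Real.log (fig8JonesReal N θ) / (N : ℝ)))
      Filter.atTop (nhds (HTilde θ)) ∧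
    (θ = Real.log ((3 + Real.sqrt 5) / 2) → HTilde θ = 0) := by
  rw [log_three_add_sqrt_five_div_two] at hθ ⊢
  have hcosh_arcosh : Real.cosh (Real.arcosh (3 / 2)) = 3 / 2 := Real.cosh_arcosh (by norm_num)
  refine ⟨?_, fun hθ_eq ↦ HTilde_eq_zero (hθ_eq ▸ hcosh_arcosh)⟩
  have hθ_pos : 0 < θ := (Real.arcosh_pos (by norm_num)).trans_le hθ
  have hcosh : 3 / 2 ≤ Real.cosh θ := by
    rw [← hcosh_arcosh, Real.cosh_le_cosh]
    exact abs_le_abs_of_nonneg (Real.arcosh_nonneg (by norm_num)) hθ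
  have hphi : phiTilde θ ∈ Set.Ico 0 θ :=
    ⟨phiTilde_nonneg hcosh, (phiTilde_lt_abs hcosh).trans_eq (abs_of_pos hθ_pos)⟩
  have hmax := isMaxOn_integral_of_antitoneOn (antitoneOn_fig8LogFactor θ) hphi
    (fig8LogFactor_phiTilde hcosh)
  have hlim := tendsto_mul_log_expPartialSums (antitoneOn_fig8LogFactor θ) hphi hmax
  rw [integral_fig8LogFactor hphi] at hlim
  refine hlim.congr fun N ↦ ?_
  rw [fig8JonesReal_eq_expPartialSums N hθ_pos.ne', div_mul_eq_mul_div, mul_div_assoc]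
end

section
/- (Hikami–Murakami.) Let θ₀ := log((3+√5)/2) = arccosh(3/2), so that e^{θ₀} is a zero of the Alexander polynomial of the figure-eight knot. Then the colored Jones polynomials of the figure-eight knot E grow polynomially of order N^{2/3} at q = e^{θ₀/N}: lim_{N→∞} J_N(E; e^{θ₀/N}) / N^{2/3} = Γ(1/3) / (3θ₀)^{2/3}, where Γ is the Gamma function. -/
open scoped Real BigOperators

/-!
The `j`-th factor of the Jones sum is `2 cosh θ - 2 cosh (jθ/N)`, and `2 cosh θ₀ = 3`, so that
`J_N = ∑_{k<N} ∏_{j≤k} φ(j/N)` with `φ u = 3 - 2 cosh (θ₀ u) = 1 - θ₀² u² + o(u²)`.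

For any `φ u = 1 + c u^p + o(u^p)`, let `M = N^{p/(p+1)}`, so `M^{p+1} = N^p`. If `k/M → x`, then
`∑_{j≤k} (j/N)^p → x^{p+1}/(p+1)`, and taking logarithms, `∏_{j≤k} φ(j/N)` tends to
`exp (c x^{p+1}/(p+1))`. The sum over `k`, divided by `M`, is therefore a Riemann sum of mesh
`1/M` for the integral of this limit over `(0, ∞)`. If also `|φ u| ≤ exp (-b u^p)` on `(0, 1]`,
the `k`-th term is at most `exp (-b (k/M)^{p+1}/(p+1))`, and dominated convergence applies.
The Riemann sums are taken at right endpoints `⌈x M⌉/M ≥ x`, where an antitone bound at the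
sample point is dominated by its value at `x`.

For `p = 2` and `c = -θ₀²` the integral is a value of the Gamma function.
-/

open Filter Topology MeasureTheory Asymptotics Set

section RiemannSum

variable {ι E : Type*} [NormedAddCommGroup E]

lemma norm_indicator_comp_natCeil_mul_le {f : ℕ → E} {n : ℕ} {M : ℝ} (hM : 0 < M) {G : ℝ → ℝ}
    (hG : AntitoneOn G (Ioi 0)) (hf : ∀ k ∈ Finset.Icc 1 n, ‖f k‖ ≤ G (k / M)) {x : ℝ}
    (hx : 0 < x) :
    ‖(Iic (n / M)).indicator (fun x ↦ f ⌈x * M⌉₊) x‖ ≤ |G x| := by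
  by_cases hxn : x ∈ Iic (n / M)
  · have hpos : 0 < ⌈x * M⌉₊ := Nat.ceil_pos.2 (by positivity)
    have hle : ⌈x * M⌉₊ ≤ n := Nat.ceil_le.2 ((le_div_iff₀ hM).1 hxn)
    have hxk : x ≤ ⌈x * M⌉₊ / M := (le_div_iff₀ hM).2 (Nat.le_ceil _)
    rw [indicator_of_mem hxn]
    calc ‖f ⌈x * M⌉₊‖ ≤ G (⌈x * M⌉₊ / M) := hf _ (Finset.mem_Icc.2 ⟨hpos, hle⟩)
      _ ≤ G x := hG hx (hx.trans_le hxk) hxk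
      _ ≤ |G x| := le_abs_self _
  · rw [indicator_of_notMem hxn, norm_zero]
    exact abs_nonneg _

variable [NormedSpace ℝ E] [CompleteSpace E]

lemma integral_comp_natCeil (f : ℕ → E) (n : ℕ) :
    ∫ x in (0 : ℝ)..n, f ⌈x⌉₊ = ∑ k ∈ Finset.range n, f (k + 1) := by
  have hle (k : ℕ) : (k : ℝ) ≤ (k + 1 : ℕ) := by simp
  have hstep (k : ℕ) :
      EqOn (fun x : ℝ ↦ f ⌈x⌉₊) (fun _ ↦ f (k + 1)) (Ioo (k : ℝ) (k + 1 : ℕ)) := fun x hx ↦ by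
    have : ⌈x⌉₊ = k + 1 := (Nat.ceil_eq_iff k.succ_ne_zero).2 ⟨by simpa using hx.1, hx.2.le⟩
    simp only [this]
  have hint (k : ℕ) : IntervalIntegrable (fun x : ℝ ↦ f ⌈x⌉₊) volume k (k + 1 : ℕ) :=
    intervalIntegrable_const.congr_uIoo (by rw [uIoo_of_le (hle k)]; exact (hstep k).symm)
  rw [← Nat.cast_zero, ← intervalIntegral.sum_integral_adjacent_intervals fun k _ ↦ hint k]
  refine Finset.sum_congr rfl fun k _ ↦ ?_
  rw [intervalIntegral.integral_congr_Ioo_of_le (hle k) (hstep k)]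
  simp

lemma setIntegral_Ioi_indicator_comp_natCeil_mul (f : ℕ → E) (n : ℕ) {M : ℝ}
    (hM : 0 < M) :
    ∫ x in Ioi 0, (Iic (n / M)).indicator (fun x ↦ f ⌈x * M⌉₊) x =
      M⁻¹ • ∑ k ∈ Finset.range n, f (k + 1) := by
  rw [setIntegral_indicator measurableSet_Iic, Ioi_inter_Iic,
    ← intervalIntegral.integral_of_le (by positivity),
    intervalIntegral.integral_comp_mul_right (fun x ↦ f ⌈x⌉₊) hM.ne', zero_mul,
    div_mul_cancel₀ _ hM.ne', integral_comp_natCeil]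

theorem tendsto_inv_smul_sum_of_antitone_bound {l : Filter ι} [l.IsCountablyGenerated]
    {f : ι → ℕ → E} {n : ι → ℕ} {M : ι → ℝ} {g : ℝ → E} {G : ℝ → ℝ}
    (hM : ∀ᶠ i in l, 0 < M i) (hn : Tendsto (fun i ↦ n i / M i) l atTop)
    (hG : AntitoneOn G (Ioi 0)) (hG_int : IntegrableOn G (Ioi 0))
    (hfG : ∀ᶠ i in l, ∀ k ∈ Finset.Icc 1 (n i), ‖f i k‖ ≤ G (k / M i))
    (hfg : ∀ x, 0 < x → Tendsto (fun i ↦ f i ⌈x * M i⌉₊) l (𝓝 (g x))) :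
    Tendsto (fun i ↦ (M i)⁻¹ • ∑ k ∈ Finset.range (n i), f i (k + 1)) l
      (𝓝 (∫ x in Ioi 0, g x)) := by
  have hmeas (i : ι) : StronglyMeasurable
      ((Iic (n i / M i)).indicator fun x ↦ f i ⌈x * M i⌉₊) :=
    ((StronglyMeasurable.of_discrete (f := f i)).comp_measurable
      (Nat.measurable_ceil.comp (measurable_id.mul_const (M i)))).indicator measurableSet_Iic
  have hlim : Tendsto
      (fun i ↦ ∫ x in Ioi 0, (Iic (n i / M i)).indicator (fun x ↦ f i ⌈x * M i⌉₊) x) l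
      (𝓝 (∫ x in Ioi 0, g x)) := by
    refine tendsto_integral_filter_of_dominated_convergence (fun x ↦ |G x|)
      (.of_forall fun i ↦ (hmeas i).aestronglyMeasurable) ?_ hG_int.abs ?_
    · filter_upwards [hM, hfG] with i hi hfi
      exact ae_restrict_of_forall_mem measurableSet_Ioi fun x hx ↦
        norm_indicator_comp_natCeil_mul_le hi hG hfi hx
    · refine ae_restrict_of_forall_mem measurableSet_Ioi fun x hx ↦ (hfg x hx).congr' ?_
      filter_upwards [hn.eventually_ge_atTop x] with i hi
      exact (indicator_of_mem (mem_Iic.2 hi) fun x ↦ f i ⌈x * M i⌉₊).symm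
  refine hlim.congr' ?_
  filter_upwards [hM] with i hi
  exact setIntegral_Ioi_indicator_comp_natCeil_mul (f i) (n i) hi

end RiemannSum

section PowerSum

variable {p : ℝ}

lemma rpow_div_le_sum_Icc_rpow (hp : 0 ≤ p) (k : ℕ) :
    (k : ℝ) ^ (p + 1) / (p + 1) ≤ ∑ j ∈ Finset.Icc 1 k, (j : ℝ) ^ p := by
  calc (k : ℝ) ^ (p + 1) / (p + 1) = ∫ x in (0 : ℕ)..(k : ℝ), x ^ p := by
        rw [integral_rpow (.inl (by linarith)), Nat.cast_zero, Real.zero_rpow (by linarith),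
          sub_zero]
    _ ≤ ∑ j ∈ Finset.Ico 0 k, ((j + 1 : ℕ) : ℝ) ^ p :=
        ((Real.monotoneOn_rpow_Ici_of_exponent_nonneg hp).mono fun x hx ↦
          (Nat.cast_nonneg 0).trans hx.1).integral_le_sum_Ico k.zero_le
    _ = ∑ j ∈ Finset.Icc 1 k, (j : ℝ) ^ p := by
        rw [Finset.sum_Ico_add' fun j : ℕ ↦ (j : ℝ) ^ p, zero_add,
          Finset.Ico_add_one_right_eq_Icc]

lemma sum_Icc_rpow_le_rpow_div (hp : 0 ≤ p) (k : ℕ) :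
    ∑ j ∈ Finset.Icc 1 k, (j : ℝ) ^ p ≤ ((k : ℝ) + 1) ^ (p + 1) / (p + 1) := by
  calc ∑ j ∈ Finset.Icc 1 k, (j : ℝ) ^ p = ∑ j ∈ Finset.Ico 1 (k + 1), (j : ℝ) ^ p := by
        rw [Finset.Ico_add_one_right_eq_Icc]
    _ ≤ ∫ x in (1 : ℕ)..((k + 1 : ℕ) : ℝ), x ^ p :=
        ((Real.monotoneOn_rpow_Ici_of_exponent_nonneg hp).mono fun x hx ↦
          (Nat.cast_nonneg 1).trans hx.1).sum_le_integral_Ico (by simp)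
    _ ≤ ((k : ℝ) + 1) ^ (p + 1) / (p + 1) := by
        rw [integral_rpow (.inl (by linarith)), Nat.cast_one, Real.one_rpow, Nat.cast_succ]
        gcongr
        linarith

lemma tendsto_sum_Icc_rpow_div {ι : Type*} {l : Filter ι} (hp : 0 ≤ p) {k : ι → ℕ} {M : ι → ℝ}
    {x : ℝ} (hM : Tendsto M l atTop) (hk : Tendsto (fun i ↦ k i / M i) l (𝓝 x)) :
    Tendsto (fun i ↦ (∑ j ∈ Finset.Icc 1 (k i), (j : ℝ) ^ p) / M i ^ (p + 1)) l
      (𝓝 (x ^ (p + 1) / (p + 1))) := by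
  have hk_succ : Tendsto (fun i ↦ (k i + 1) / M i) l (𝓝 x) := by
    simpa [add_div] using hk.add (tendsto_inv_atTop_zero.comp hM)
  refine tendsto_of_tendsto_of_tendsto_of_le_of_le'
    ((hk.rpow_const (.inr (by linarith))).div_const (p + 1))
    ((hk_succ.rpow_const (.inr (by linarith))).div_const (p + 1)) ?_ ?_
  all_goals
    filter_upwards [hM.eventually_gt_atTop 0] with i hi
    rw [Real.div_rpow (by positivity) hi.le, div_right_comm]
    gcongr
  · exact rpow_div_le_sum_Icc_rpow hp (k i)
  · exact sum_Icc_rpow_le_rpow_div hp (k i)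

lemma sum_div_rpow (s : Finset ℕ) (p : ℝ) (N : ℕ) :
    ∑ j ∈ s, ((j : ℝ) / N) ^ p = (∑ j ∈ s, (j : ℝ) ^ p) / (N : ℝ) ^ p := by
  simp only [Real.div_rpow (Nat.cast_nonneg _) (Nat.cast_nonneg N), Finset.sum_div]

lemma rpow_div_add_one_rpow_add_one {x : ℝ} (hx : 0 ≤ x) (hp : p + 1 ≠ 0) :
    (x ^ (p / (p + 1))) ^ (p + 1) = x ^ p := by
  rw [← Real.rpow_mul hx, div_mul_cancel₀ _ hp]

lemma tendsto_rpow_nhdsGT_zero (hp : 0 < p) :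
    Tendsto (fun u : ℝ ↦ u ^ p) (𝓝[>] 0) (𝓝 0) := by
  simpa [Real.zero_rpow hp.ne'] using
    (Real.continuousAt_rpow_const 0 p (.inr hp.le)).tendsto.mono_left nhdsWithin_le_nhds

lemma tendsto_natCast_rpow_div_add_one (hp : 0 < p) :
    Tendsto (fun N : ℕ ↦ (N : ℝ) ^ (p / (p + 1))) atTop atTop :=
  (tendsto_rpow_atTop (by positivity)).comp tendsto_natCast_atTop_atTop

lemma tendsto_natCast_div_rpow (hp : 0 < p) :
    Tendsto (fun N : ℕ ↦ (N : ℝ) / (N : ℝ) ^ (p / (p + 1))) atTop atTop := by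
  refine ((tendsto_rpow_atTop (y := 1 - p / (p + 1)) ?_).comp
    tendsto_natCast_atTop_atTop).congr' ?_
  · rw [sub_pos, div_lt_one (by positivity)]
    linarith
  · filter_upwards [eventually_gt_atTop 0] with N hN
    simp [Real.rpow_sub (Nat.cast_pos.2 hN)]

lemma tendsto_div_natCast_of_tendsto_div_rpow (hp : 0 < p) {k : ℕ → ℕ} {x : ℝ}
    (hk : Tendsto (fun N ↦ k N / (N : ℝ) ^ (p / (p + 1))) atTop (𝓝 x)) :
    Tendsto (fun N ↦ (k N : ℝ) / N) atTop (𝓝 0) := by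
  refine (hk.div_atTop (tendsto_natCast_div_rpow hp)).congr' ?_
  filter_upwards [eventually_gt_atTop 0] with N hN
  exact div_div_div_cancel_right₀ (Real.rpow_pos_of_pos (Nat.cast_pos.2 hN) _).ne' _ _

lemma tendsto_sum_Icc_div_rpow (hp : 0 < p) {k : ℕ → ℕ} {x : ℝ}
    (hk : Tendsto (fun N ↦ k N / (N : ℝ) ^ (p / (p + 1))) atTop (𝓝 x)) :
    Tendsto (fun N ↦ ∑ j ∈ Finset.Icc 1 (k N), ((j : ℝ) / N) ^ p) atTop
      (𝓝 (x ^ (p + 1) / (p + 1))) := by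
  have h := tendsto_sum_Icc_rpow_div hp.le (tendsto_natCast_rpow_div_add_one hp) hk
  simpa only [sum_div_rpow, rpow_div_add_one_rpow_add_one (Nat.cast_nonneg _)
    (by positivity : p + 1 ≠ 0)] using h

end PowerSum

section Product

lemma isLittleO_sum_of_forall_eventually {α ι κ E F : Type*} [NormedAddCommGroup E]
    [NormedAddCommGroup F] {l : Filter ι} {L : Filter α} {r : α → E} {w : α → F}
    {s : ι → Finset κ} {u : ι → κ → α} (h : r =o[L] w)
    (hu : ∀ P : α → Prop, (∀ᶠ a in L, P a) → ∀ᶠ i in l, ∀ j ∈ s i, P (u i j)) :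
    (fun i ↦ ∑ j ∈ s i, r (u i j)) =o[l] fun i ↦ ∑ j ∈ s i, ‖w (u i j)‖ := by
  refine isLittleO_iff.2 fun ε hε ↦ ?_
  filter_upwards [hu _ (isLittleO_iff.1 h hε)] with i hi
  calc ‖∑ j ∈ s i, r (u i j)‖ ≤ ∑ j ∈ s i, ε * ‖w (u i j)‖ := norm_sum_le_of_le _ hi
    _ = ε * ∑ j ∈ s i, ‖w (u i j)‖ := (Finset.mul_sum ..).symm
    _ ≤ ε * ‖∑ j ∈ s i, ‖w (u i j)‖‖ := by gcongr; exact Real.le_norm_self _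

lemma eventually_forall_Icc_div {k : ℕ → ℕ} (hk : Tendsto (fun N ↦ (k N : ℝ) / N) atTop (𝓝 0))
    {P : ℝ → Prop} (hP : ∀ᶠ u in 𝓝[>] 0, P u) :
    ∀ᶠ N : ℕ in atTop, ∀ j ∈ Finset.Icc 1 (k N), P (j / N) := by
  obtain ⟨δ, hδ, hPδ⟩ := mem_nhdsGT_iff_exists_Ioo_subset.1 hP
  filter_upwards [hk.eventually_lt_const hδ, eventually_gt_atTop 0] with N hN hN0 j hj
  obtain ⟨hj1, hjk⟩ := Finset.mem_Icc.1 hj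
  exact hPδ ⟨by positivity, lt_of_le_of_lt (by gcongr) hN⟩

section Log

variable {α : Type*} {L : Filter α} {φ v w : α → ℝ}

lemma isBigO_sub_one_of_isLittleO (hφ : (fun a ↦ φ a - (1 + v a)) =o[L] w) (hv : v =O[L] w) :
    (fun a ↦ φ a - 1) =O[L] w :=
  (hφ.isBigO.add hv).congr_left fun a ↦ by ring

lemma tendsto_one_of_isLittleO (hφ : (fun a ↦ φ a - (1 + v a)) =o[L] w) (hv : v =O[L] w)
    (hw : Tendsto w L (𝓝 0)) : Tendsto φ L (𝓝 1) :=
  tendsto_sub_nhds_zero_iff.1 ((isBigO_sub_one_of_isLittleO hφ hv).trans_tendsto hw)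

lemma isLittleO_log_sub (hφ : (fun a ↦ φ a - (1 + v a)) =o[L] w) (hv : v =O[L] w)
    (hw : Tendsto w L (𝓝 0)) : (fun a ↦ Real.log (φ a) - v a) =o[L] w := by
  have hlog : (fun a ↦ Real.log (φ a) - (φ a - 1)) =o[L] fun a ↦ φ a - 1 := by
    simpa [Function.comp_def] using (Real.hasDerivAt_log one_ne_zero).isLittleO.comp_tendsto
      (tendsto_one_of_isLittleO hφ hv hw)
  exact ((hlog.trans_isBigO (isBigO_sub_one_of_isLittleO hφ hv)).add hφ).congr_left
    fun a ↦ by ring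

end Log

variable {φ : ℝ → ℝ} {p b c : ℝ}

lemma tendsto_sum_log_Icc_div (hp : 0 < p)
    (hφ : (fun u ↦ φ u - (1 + c * u ^ p)) =o[𝓝[>] 0] fun u ↦ u ^ p) {k : ℕ → ℕ} {x : ℝ}
    (hk : Tendsto (fun N ↦ k N / (N : ℝ) ^ (p / (p + 1))) atTop (𝓝 x)) :
    Tendsto (fun N ↦ ∑ j ∈ Finset.Icc 1 (k N), Real.log (φ (j / N))) atTop
      (𝓝 (c * (x ^ (p + 1) / (p + 1)))) := by
  have hsum := tendsto_sum_Icc_div_rpow hp hk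
  have hk_div : Tendsto (fun N ↦ (k N : ℝ) / N) atTop (𝓝 0) :=
    tendsto_div_natCast_of_tendsto_div_rpow hp hk
  have hbdd : (fun N : ℕ ↦ ∑ j ∈ Finset.Icc 1 (k N), ‖((j : ℝ) / N) ^ p‖) =O[atTop]
      fun _ ↦ (1 : ℝ) := by
    simpa only [Real.norm_of_nonneg (Real.rpow_nonneg (div_nonneg (Nat.cast_nonneg _)
      (Nat.cast_nonneg _)) p)] using hsum.isBigO_one ℝ
  have herr : Tendsto (fun N ↦ ∑ j ∈ Finset.Icc 1 (k N),
      (Real.log (φ (j / N)) - c * ((j : ℝ) / N) ^ p)) atTop (𝓝 0) :=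
    (isLittleO_one_iff ℝ).1 <| (isLittleO_sum_of_forall_eventually
      (isLittleO_log_sub hφ (isBigO_const_mul_self c _ _) (tendsto_rpow_nhdsGT_zero hp))
      fun P ↦ eventually_forall_Icc_div hk_div).trans_isBigO hbdd
  simpa [Finset.sum_sub_distrib, Finset.mul_sum] using herr.add (hsum.const_mul c)

theorem tendsto_prod_Icc_div (hp : 0 < p)
    (hφ : (fun u ↦ φ u - (1 + c * u ^ p)) =o[𝓝[>] 0] fun u ↦ u ^ p) {k : ℕ → ℕ} {x : ℝ}
    (hk : Tendsto (fun N ↦ k N / (N : ℝ) ^ (p / (p + 1))) atTop (𝓝 x)) :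
    Tendsto (fun N ↦ ∏ j ∈ Finset.Icc 1 (k N), φ (j / N)) atTop
      (𝓝 (Real.exp (c * (x ^ (p + 1) / (p + 1))))) := by
  have hpos : ∀ᶠ u in 𝓝[>] 0, 0 < φ u :=
    (tendsto_one_of_isLittleO hφ (isBigO_const_mul_self c _ _)
      (tendsto_rpow_nhdsGT_zero hp)).eventually_const_lt one_pos
  refine (tendsto_sum_log_Icc_div hp hφ hk).rexp.congr' ?_
  have hk_div : Tendsto (fun N ↦ (k N : ℝ) / N) atTop (𝓝 0) :=
    tendsto_div_natCast_of_tendsto_div_rpow hp hk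
  filter_upwards [eventually_forall_Icc_div hk_div hpos] with N hN
  rw [Real.exp_sum]
  exact Finset.prod_congr rfl fun j hj ↦ Real.exp_log (hN j hj)

lemma antitoneOn_exp_neg_mul_rpow {q : ℝ} (hb : 0 ≤ b) (hq : 0 ≤ q) :
    AntitoneOn (fun x : ℝ ↦ Real.exp (-b * x ^ q)) (Ioi 0) := fun x hx y _ hxy ↦ by
  simp only [neg_mul]
  have := mem_Ioi.1 hx
  gcongr

lemma integrableOn_exp_neg_mul_rpow {q : ℝ} (hb : 0 < b) (hq : 0 < q) :
    IntegrableOn (fun x : ℝ ↦ Real.exp (-b * x ^ q)) (Ioi 0) := by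
  simpa using integrableOn_rpow_mul_exp_neg_mul_rpow neg_one_lt_zero hq hb

lemma abs_prod_Icc_div_le (hp : 0 ≤ p) (hb : 0 ≤ b)
    (hφ : ∀ u ∈ Ioc 0 1, |φ u| ≤ Real.exp (-b * u ^ p)) {k N : ℕ} (hk : k ≤ N) :
    |∏ j ∈ Finset.Icc 1 k, φ (j / N)| ≤
      Real.exp (-(b / (p + 1)) * (k / (N : ℝ) ^ (p / (p + 1))) ^ (p + 1)) := by
  have hmem : ∀ j ∈ Finset.Icc 1 k, (j / N : ℝ) ∈ Ioc 0 1 := fun j hj ↦ by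
    obtain ⟨hj1, hjk⟩ := Finset.mem_Icc.1 hj
    have hjN : (j : ℝ) ≤ N := by exact_mod_cast hjk.trans hk
    have hN : 0 < N := by omega
    exact ⟨by positivity, div_le_one_of_le₀ hjN (by positivity)⟩
  calc |∏ j ∈ Finset.Icc 1 k, φ (j / N)|
      ≤ ∏ j ∈ Finset.Icc 1 k, Real.exp (-b * ((j : ℝ) / N) ^ p) := by
        rw [Finset.abs_prod]
        exact Finset.prod_le_prod (fun _ _ ↦ abs_nonneg _) fun j hj ↦ hφ _ (hmem j hj)
    _ = Real.exp (-b * ((∑ j ∈ Finset.Icc 1 k, (j : ℝ) ^ p) / (N : ℝ) ^ p)) := by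
        rw [← Real.exp_sum, ← Finset.mul_sum, sum_div_rpow]
    _ ≤ Real.exp (-b * ((k : ℝ) ^ (p + 1) / (p + 1) / (N : ℝ) ^ p)) := by
        simp only [neg_mul]
        gcongr
        exact rpow_div_le_sum_Icc_rpow hp k
    _ = Real.exp (-(b / (p + 1)) * (k / (N : ℝ) ^ (p / (p + 1))) ^ (p + 1)) := by
        rw [Real.div_rpow (by positivity) (by positivity),
          rpow_div_add_one_rpow_add_one (by positivity) (by positivity)]
        ring_nf

theorem tendsto_sum_prod_Icc_div (hp : 0 < p) (hb : 0 < b)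
    (hφ_le : ∀ u ∈ Ioc 0 1, |φ u| ≤ Real.exp (-b * u ^ p))
    (hφ : (fun u ↦ φ u - (1 + c * u ^ p)) =o[𝓝[>] 0] fun u ↦ u ^ p) :
    Tendsto (fun N : ℕ ↦ (∑ k ∈ Finset.range N, ∏ j ∈ Finset.Icc 1 k, φ (j / N)) /
      (N : ℝ) ^ (p / (p + 1))) atTop
      (𝓝 (∫ x in Ioi 0, Real.exp (c * (x ^ (p + 1) / (p + 1))))) := by
  set P : ℕ → ℕ → ℝ := fun N k ↦ ∏ j ∈ Finset.Icc 1 k, φ (j / N)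
  have hM := tendsto_natCast_rpow_div_add_one hp
  have hP_le {N k : ℕ} (hk : k ≤ N) : |P N k| ≤
      Real.exp (-(b / (p + 1)) * (k / (N : ℝ) ^ (p / (p + 1))) ^ (p + 1)) :=
    abs_prod_Icc_div_le hp.le hb.le hφ_le hk
  have hshift : Tendsto
      (fun N : ℕ ↦ ((N : ℝ) ^ (p / (p + 1)))⁻¹ • ∑ k ∈ Finset.range N, P N (k + 1)) atTop
      (𝓝 (∫ x in Ioi 0, Real.exp (c * (x ^ (p + 1) / (p + 1))))) :=
    tendsto_inv_smul_sum_of_antitone_bound (hM.eventually_gt_atTop 0) (tendsto_natCast_div_rpow hp)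
      (antitoneOn_exp_neg_mul_rpow (by positivity) (by positivity))
      (integrableOn_exp_neg_mul_rpow (by positivity) (by positivity))
      (.of_forall fun N k hk ↦ hP_le (Finset.mem_Icc.1 hk).2)
      fun x hx ↦ tendsto_prod_Icc_div hp hφ ((tendsto_nat_ceil_mul_div_atTop hx.le).comp hM)
  have hboundary : Tendsto (fun N : ℕ ↦ (1 - P N N) / (N : ℝ) ^ (p / (p + 1))) atTop (𝓝 0) := by
    have hP_diag (N : ℕ) : |P N N| ≤ 1 :=
      (hP_le le_rfl).trans (Real.exp_le_one_iff.2 (by rw [neg_mul, neg_nonpos]; positivity))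
    exact tendsto_bdd_div_atTop_nhds_zero (b := 0) (B := 2)
      (.of_forall fun N ↦ by linarith [(abs_le.1 (hP_diag N)).2])
      (.of_forall fun N ↦ by linarith [(abs_le.1 (hP_diag N)).1]) hM
  have hadd := hshift.add hboundary
  rw [add_zero] at hadd
  refine hadd.congr fun N ↦ ?_
  have hsum : ∑ k ∈ Finset.range N, P N k = ∑ k ∈ Finset.range N, P N (k + 1) + (1 - P N N) := by
    have hP_zero : P N 0 = 1 := by simp [P]
    linarith [Finset.sum_range_succ (P N) N, Finset.sum_range_succ' (P N) N]
  rw [hsum, smul_eq_mul]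
  ring

end Product

section FigureEight

lemma fig8JonesReal_eq_sum_prod_cosh_sub_cosh (N : ℕ) (θ : ℝ) :
    fig8JonesReal N θ = ∑ k ∈ Finset.range N, ∏ j ∈ Finset.Icc 1 k,
      (2 * Real.cosh θ - 2 * Real.cosh (θ * (j / N))) := by
  refine Finset.sum_congr rfl fun k hk ↦ Finset.prod_congr rfl fun j _ ↦ ?_
  have hN : (N : ℝ) ≠ 0 := Nat.cast_ne_zero.2 (Nat.ne_zero_of_lt (Finset.mem_range.1 hk))
  have hsub : ((N : ℝ) - j) * θ / (2 * N) = θ / 2 - θ * (j / N) / 2 := by field_simp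
  have hadd : ((N : ℝ) + j) * θ / (2 * N) = θ / 2 + θ * (j / N) / 2 := by field_simp
  rw [neg_div, neg_div, hsub, hadd, Real.cosh_eq, Real.cosh_eq]
  simp only [sub_mul, mul_sub, ← Real.exp_add]
  ring_nf

lemma three_sub_two_mul_cosh (x : ℝ) :
    3 - 2 * Real.cosh x = 1 - 4 * Real.sinh (x / 2) ^ 2 := by
  have h := Real.cosh_two_mul (x / 2)
  rw [mul_div_cancel₀ x two_ne_zero, Real.cosh_sq] at h
  linarith

lemma three_sub_two_mul_cosh_le_exp (x : ℝ) : 3 - 2 * Real.cosh x ≤ Real.exp (-x ^ 2) := by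
  have hsinh : (x / 2) ^ 2 ≤ Real.sinh (x / 2) ^ 2 := by
    rw [sq_le_sq, Real.abs_sinh]
    exact Real.self_le_sinh_iff.2 (abs_nonneg _)
  rw [three_sub_two_mul_cosh]
  linarith [Real.add_one_le_exp (-x ^ 2)]

lemma isLittleO_three_sub_two_mul_cosh :
    (fun x ↦ 3 - 2 * Real.cosh x - (1 - x ^ 2)) =o[𝓝 0] fun x ↦ x ^ 2 := by
  have hhalf : Tendsto (fun x : ℝ ↦ x / 2) (𝓝 0) (𝓝 0) := by
    simpa using (continuous_id.div_const (2 : ℝ)).tendsto 0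
  have hsinh : (fun x ↦ Real.sinh (x / 2) ^ 2 - (x / 2) ^ 2) =o[𝓝 0] fun x ↦ (x / 2) ^ 2 :=
    ((Real.isEquivalent_sinh.comp_tendsto hhalf).pow 2).isLittleO
  have hsq : (fun x : ℝ ↦ (x / 2) ^ 2) =O[𝓝 0] fun x ↦ x ^ 2 :=
    (isBigO_const_mul_self (1 / 4) (fun x : ℝ ↦ x ^ 2) _).congr_left fun x ↦ by ring
  refine ((hsinh.const_mul_left (-4)).trans_isBigO hsq).congr_left fun x ↦ ?_
  rw [three_sub_two_mul_cosh]
  ring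

lemma integral_exp_neg_sq_mul_rpow_three_div {θ : ℝ} (hθ : 0 < θ) :
    ∫ x in Ioi 0, Real.exp (-θ ^ 2 * (x ^ (3 : ℝ) / 3)) =
      Real.Gamma (1 / 3) / (3 * θ) ^ (2 / 3 : ℝ) := by
  have hscale : (3 * θ) ^ (2 / 3 : ℝ) = 3 * (θ ^ 2 / 3) ^ (1 / 3 : ℝ) := by
    calc (3 * θ) ^ (2 / 3 : ℝ) = ((3 * θ) ^ 2) ^ (1 / 3 : ℝ) := by
          rw [← Real.rpow_natCast_mul (by positivity)]
          norm_num
      _ = (3 ^ 3 * (θ ^ 2 / 3)) ^ (1 / 3 : ℝ) := by ring_nf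
      _ = 3 * (θ ^ 2 / 3) ^ (1 / 3 : ℝ) := by
          rw [Real.mul_rpow (by positivity) (by positivity),
            ← Real.rpow_natCast_mul (by positivity)]
          norm_num
  calc ∫ x in Ioi 0, Real.exp (-θ ^ 2 * (x ^ (3 : ℝ) / 3))
      = ∫ x in Ioi 0, Real.exp (-(θ ^ 2 / 3) * x ^ (3 : ℝ)) := by
        congr! 3 with x
        ring
    _ = (θ ^ 2 / 3) ^ (-1 / 3 : ℝ) * (1 / 3 * Real.Gamma (1 / 3)) := by
        rw [integral_exp_neg_mul_rpow (by norm_num) (by positivity),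
          Real.Gamma_add_one (by norm_num)]
    _ = Real.Gamma (1 / 3) / (3 * θ) ^ (2 / 3 : ℝ) := by
        rw [hscale, neg_div, Real.rpow_neg (by positivity)]
        field_simp

lemma cosh_log_three_add_sqrt_five_div_two : Real.cosh (Real.log ((3 + √5) / 2)) = 3 / 2 := by
  have hsq : √5 ^ 2 = 5 := Real.sq_sqrt (by norm_num)
  rw [Real.cosh_log (by positivity)]
  field_simp
  linarith

theorem tendsto_fig8JonesReal_div_rpow {θ : ℝ} (hθ : 0 < θ) (hcosh : Real.cosh θ = 3 / 2) :
    Tendsto (fun N : ℕ ↦ fig8JonesReal N θ / (N : ℝ) ^ (2 / 3 : ℝ)) atTop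
      (𝓝 (Real.Gamma (1 / 3) / (3 * θ) ^ (2 / 3 : ℝ))) := by
  have hnonneg {u : ℝ} (hu : u ∈ Ioc 0 1) : 0 ≤ 3 - 2 * Real.cosh (θ * u) := by
    have : Real.cosh (θ * u) ≤ Real.cosh θ := by
      rw [Real.cosh_le_cosh, abs_of_pos hθ, abs_of_pos (mul_pos hθ hu.1)]
      exact mul_le_of_le_one_right hθ.le hu.2
    linarith
  have hle : ∀ u ∈ Ioc 0 1, |3 - 2 * Real.cosh (θ * u)| ≤ Real.exp (-θ ^ 2 * u ^ (2 : ℝ)) :=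
    fun u hu ↦ by
      simpa [abs_of_nonneg (hnonneg hu), mul_pow] using three_sub_two_mul_cosh_le_exp (θ * u)
  have hasymp : (fun u ↦ 3 - 2 * Real.cosh (θ * u) - (1 + -θ ^ 2 * u ^ (2 : ℝ))) =o[𝓝[>] 0]
      fun u ↦ u ^ (2 : ℝ) := by
    have hmul : Tendsto (fun u ↦ θ * u) (𝓝[>] 0) (𝓝 0) := by
      simpa using ((continuous_const_mul θ).tendsto 0).mono_left nhdsWithin_le_nhds
    refine ((isLittleO_three_sub_two_mul_cosh.comp_tendsto hmul).trans_isBigO ?_).congr_left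
      fun u ↦ ?_
    · simpa [Function.comp_def, mul_pow] using isBigO_const_mul_self (θ ^ 2) (fun u : ℝ ↦ u ^ 2) _
    · rw [Function.comp_apply, Real.rpow_two, mul_pow]
      ring
  have hthree : 2 * (3 / 2 : ℝ) = 3 := by norm_num
  simpa only [fig8JonesReal_eq_sum_prod_cosh_sub_cosh, hcosh, hthree, two_add_one_eq_three,
    integral_exp_neg_sq_mul_rpow_three_div hθ] using
    tendsto_sum_prod_Icc_div two_pos (by positivity) hle hasymp

end FigureEight

/-- (Hikami–Murakami.) At `θ₀ = log((3+√5)/2) = arccosh(3/2)`, a zero of the Alexander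
polynomial, the colored Jones polynomials of the figure-eight knot grow like `N^{2/3}`:
`lim_{N→∞} J_N(E; e^{θ₀/N})/N^{2/3} = Γ(1/3)/(3θ₀)^{2/3}`. -/
theorem fig8_polynomial_growth :
    Filter.Tendsto
      (fun N : ℕ =>
        fig8JonesReal N (Real.log ((3 + Real.sqrt 5) / 2)) / (N : ℝ) ^ ((2 : ℝ) / 3))
      Filter.atTop
      (nhds (Real.Gamma (1 / 3) /
        (3 * Real.log ((3 + Real.sqrt 5) / 2)) ^ ((2 : ℝ) / 3))) :=
  tendsto_fig8JonesReal_div_rpow (Real.log_pos (by linarith [Real.sqrt_nonneg 5]))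
    cosh_log_three_add_sqrt_five_div_two
end

section
/- (Hikami–Murakami, case of the trefoil.) Let θ₀ := 2πi/6 = πi/3, so that e^{θ₀} is a zero of the Alexander polynomial of the trefoil T = T(2,3). Then lim_{N→∞} J_N(T; e^{θ₀/N}) / N^{1/2} = e^{−πi/4} · √(3/2). (This is the instance a=2, b=3 of the asymptotics J_N(T(a,b); exp(2πi/(abN))) ∼ e^{−πi/4}·(sin(π/a)sin(π/b)/(√2 sin(π/(ab))))·N^{1/2}, since sin(π/2)sin(π/3)/(√2 sin(π/6)) = √(3/2).) -/
/-!
With `F y = e^{-θ} (1 - e^{(y-1)θ})`, the `k`-th summand of the Habiro–Lê formula is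
`∏_{j=1}^{k} F (j/N)`. The condition `F 0 = 1` says exactly that `e^θ` is a zero of the Alexander
polynomial `t - 1 + t⁻¹`; for such `θ` the product tends to `exp (d s² / 2)` when `k ≈ s √N`,
where `d` is the derivative of `F` at `0`.
For `θ = πi/3` one has `‖F y‖ = 2 sin (π (1 - y) / 6) ≤ e^{-y/2}` on `[0, 1]`, so the summands are
dominated by a Gaussian, and `N^{-1/2}` times their sum, read as the integral of a step function,
converges to `∫₀^∞ exp (d s² / 2) ds = √(3/2) e^{πi/12}`. The prefactor
`e^{(1-N)θ/N} → e^{-πi/3}` turns the phase into `e^{-πi/4}`.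
-/

open scoped Real BigOperators

/-- The `N`-colored Jones polynomial of the trefoil knot evaluated at `q = e^{θ/N}`
(Habiro–Lê formula). -/
noncomputable def trefoilJones (N : ℕ) (θ : ℂ) : ℂ :=
  Complex.exp ((1 - (N : ℂ)) * θ / N) *
    ∑ k ∈ Finset.range N, Complex.exp (-(k : ℂ) * θ) *
      ∏ j ∈ Finset.Icc 1 k, (1 - Complex.exp (((j : ℂ) - N) * θ / N))

open Filter MeasureTheory Topology

section TriangularArrays

variable {ι κ E G : Type*} [NormedAddCommGroup E] [NormedSpace ℝ E]
  [NormedAddCommGroup G] [NormedSpace ℝ G]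
  {l : Filter ι} {s : ι → Finset κ} {x : ι → κ → E} {S : E} {C : ℝ}

lemma tendsto_sum_of_hasFDerivAt {g : E → G} {g' : E →L[ℝ] G} (hg : HasFDerivAt g g' 0)
    (hg0 : g 0 = 0) (hsmall : ∀ U ∈ 𝓝 (0 : E), ∀ᶠ i in l, ∀ j ∈ s i, x i j ∈ U)
    (hbdd : ∀ᶠ i in l, ∑ j ∈ s i, ‖x i j‖ ≤ C)
    (hsum : Tendsto (fun i => ∑ j ∈ s i, x i j) l (𝓝 S)) :
    Tendsto (fun i => ∑ j ∈ s i, g (x i j)) l (𝓝 (g' S)) := by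
  have herr : Tendsto (fun i => ∑ j ∈ s i, g (x i j) - g' (∑ j ∈ s i, x i j)) l (𝓝 0) := by
    rw [Metric.tendsto_nhds]
    intro ε hε
    set δ := ε / (|C| + 1)
    have hδ : 0 < δ := by positivity
    have hlin : ∀ᶠ y in 𝓝 (0 : E), ‖g y - g' y‖ ≤ δ * ‖y‖ := by
      simpa [hg0] using (hasFDerivAt_iff_isLittleO.1 hg).def hδ
    filter_upwards [hsmall _ hlin, hbdd] with i hi hC
    rw [dist_zero_right, map_sum, ← Finset.sum_sub_distrib]
    calc ‖∑ j ∈ s i, (g (x i j) - g' (x i j))‖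
        ≤ ∑ j ∈ s i, δ * ‖x i j‖ := norm_sum_le_of_le _ hi
      _ = δ * ∑ j ∈ s i, ‖x i j‖ := (Finset.mul_sum _ _ _).symm
      _ < δ * (|C| + 1) := by gcongr; linarith [le_abs_self C]
      _ = ε := div_mul_cancel₀ _ (by positivity)
  simpa using herr.add ((g'.continuous.tendsto S).comp hsum)

lemma tendsto_prod_of_hasFDerivAt {f : E → ℂ} {f' : E →L[ℝ] ℂ} (hf : HasFDerivAt f f' 0)
    (hf0 : f 0 = 1) (hsmall : ∀ U ∈ 𝓝 (0 : E), ∀ᶠ i in l, ∀ j ∈ s i, x i j ∈ U)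
    (hbdd : ∀ᶠ i in l, ∑ j ∈ s i, ‖x i j‖ ≤ C)
    (hsum : Tendsto (fun i => ∑ j ∈ s i, x i j) l (𝓝 S)) :
    Tendsto (fun i => ∏ j ∈ s i, f (x i j)) l (𝓝 (Complex.exp (f' S))) := by
  have hlog : HasFDerivAt (fun y => Complex.log (f y)) f' 0 := by
    have h1 : f 0 ∈ Complex.slitPlane := hf0 ▸ Complex.one_mem_slitPlane
    refine ((Complex.hasStrictFDerivAt_log_real h1).hasFDerivAt.comp 0 hf).congr_fderiv ?_
    ext v
    simp [hf0]
  have hne : ∀ᶠ y in 𝓝 (0 : E), f y ≠ 0 := hf.continuousAt.eventually_ne (by simp [hf0])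
  have hlim := tendsto_sum_of_hasFDerivAt hlog (by simp [hf0]) hsmall hbdd hsum
  refine ((Complex.continuous_exp.tendsto _).comp hlim).congr' ?_
  filter_upwards [hsmall _ hne] with i hi
  rw [Function.comp_apply, Complex.exp_sum]
  exact Finset.prod_congr rfl fun j hj => Complex.exp_log (hi j hj)

end TriangularArrays

section SumsAsIntegrals

variable {E : Type*} [NormedAddCommGroup E] [NormedSpace ℝ E] [CompleteSpace E]

lemma sum_range_eq_intervalIntegral_floor (f : ℕ → E) (n : ℕ) :
    ∑ k ∈ Finset.range n, f k = ∫ u in (0 : ℝ)..n, f ⌊u⌋₊ := by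
  have hfloor (k : ℕ) : Set.EqOn (fun u : ℝ => f ⌊u⌋₊) (fun _ => f k)
      (Set.Ioo (k : ℝ) ((k + 1 : ℕ) : ℝ)) := by
    intro u hu
    have : ⌊u⌋₊ = k := (Nat.floor_eq_iff (k.cast_nonneg.trans hu.1.le)).2
      ⟨hu.1.le, by exact_mod_cast hu.2⟩
    simp only [this]
  have hint (k : ℕ) : IntervalIntegrable (fun u : ℝ => f ⌊u⌋₊) volume k ((k + 1 : ℕ) : ℝ) := by
    rw [intervalIntegrable_iff_integrableOn_Ioo_of_le (by simp),
      integrableOn_congr_fun (hfloor k) measurableSet_Ioo]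
    simp
  have hval (k : ℕ) : ∫ u in (k : ℝ)..((k + 1 : ℕ) : ℝ), f ⌊u⌋₊ = f k := by
    rw [intervalIntegral.integral_of_le (by simp), integral_Ioc_eq_integral_Ioo,
      setIntegral_congr_fun measurableSet_Ioo (hfloor k)]
    simp
  simpa only [hval, Nat.cast_zero] using
    intervalIntegral.sum_integral_adjacent_intervals (a := fun k : ℕ => (k : ℝ)) (n := n)
      fun k _ => hint k

lemma inv_smul_sum_range_eq_integral (f : ℕ → E) (n : ℕ) {r : ℝ} (hr : 0 < r) :
    r⁻¹ • ∑ k ∈ Finset.range n, f k =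
      ∫ t in Set.Ioi (0 : ℝ), (Set.Iio (n : ℝ)).indicator (fun u => f ⌊u⌋₊) (r * t) := by
  rw [integral_comp_mul_left_Ioi _ 0 hr, mul_zero, setIntegral_indicator measurableSet_Iio,
    Set.Ioi_inter_Iio, ← integral_Ioc_eq_integral_Ioo,
    ← intervalIntegral.integral_of_le n.cast_nonneg, sum_range_eq_intervalIntegral_floor]

theorem tendsto_inv_smul_sum_range_of_dominated {ι : Type*} {l : Filter ι}
    [l.IsCountablyGenerated] {f : ι → ℕ → E} {n : ι → ℕ} {r : ι → ℝ} {g : ℝ → E} {bound : ℝ → ℝ}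
    (hn : Tendsto (fun i => n i / r i) l atTop)
    (hbound : IntegrableOn bound (Set.Ioi 0))
    (hle : ∀ᶠ i in l, ∀ t, 0 < t → r i * t < n i → ‖f i ⌊r i * t⌋₊‖ ≤ bound t)
    (hlim : ∀ t, 0 < t → Tendsto (fun i => f i ⌊r i * t⌋₊) l (𝓝 (g t))) :
    Tendsto (fun i => (r i)⁻¹ • ∑ k ∈ Finset.range (n i), f i k) l
      (𝓝 (∫ t in Set.Ioi (0 : ℝ), g t)) := by
  have hr : ∀ᶠ i in l, 0 < r i := by
    filter_upwards [hn.eventually_gt_atTop 0] with i hi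
    by_contra! h
    exact hi.not_ge (div_nonpos_of_nonneg_of_nonpos (n i).cast_nonneg h)
  refine Tendsto.congr' (hr.mono fun i hi => (inv_smul_sum_range_eq_integral (f i) (n i) hi).symm)
    (tendsto_integral_filter_of_dominated_convergence (fun t => ‖bound t‖) ?_ ?_ hbound.norm ?_)
  · refine .of_forall fun i => StronglyMeasurable.aestronglyMeasurable ?_
    exact ((StronglyMeasurable.of_discrete.comp_measurable Nat.measurable_floor).indicator
      measurableSet_Iio).comp_measurable (measurable_const_mul (r i))
  · filter_upwards [hle] with i hi
    filter_upwards [ae_restrict_mem measurableSet_Ioi] with t ht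
    by_cases h : r i * t < n i
    · rw [Set.indicator_of_mem (Set.mem_Iio.2 h)]
      exact (hi t ht h).trans (le_abs_self _)
    · rw [Set.indicator_of_notMem (mt Set.mem_Iio.1 h), norm_zero]
      exact norm_nonneg _
  · filter_upwards [ae_restrict_mem measurableSet_Ioi] with t ht
    refine (hlim t ht).congr' ?_
    filter_upwards [hr, hn.eventually_gt_atTop t] with i hi hti
    rw [Set.indicator_of_mem (Set.mem_Iio.2 ((lt_div_iff₀' hi).1 hti))]

end SumsAsIntegrals

lemma integral_exp_neg_polar_mul_sq_Ioi {r φ : ℝ} (hr : 0 < r) (hφ : |φ| < π / 2) :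
    ∫ t in Set.Ioi (0 : ℝ), Complex.exp (-(r * Complex.exp (-φ * Complex.I)) * t ^ 2) =
      √(π / r) / 2 * Complex.exp (φ / 2 * Complex.I) := by
  obtain ⟨hφ₁, hφ₂⟩ := abs_lt.1 hφ
  have hre : 0 < (r * Complex.exp (-φ * Complex.I)).re := by
    rw [Complex.re_ofReal_mul, ← Complex.ofReal_neg, Complex.exp_ofReal_mul_I_re, Real.cos_neg]
    exact mul_pos hr (Real.cos_pos_of_mem_Ioo ⟨hφ₁, hφ₂⟩)
  have hpolar : (π : ℂ) / (r * Complex.exp (-φ * Complex.I)) =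
      ((π / r : ℝ) : ℂ) * Complex.exp (φ * Complex.I) := by
    rw [neg_mul, Complex.exp_neg]
    push_cast
    field_simp
  have hlog : Complex.log (((π / r : ℝ) : ℂ) * Complex.exp (φ * Complex.I)) =
      Real.log (π / r) + φ * Complex.I := by
    rw [Complex.log_ofReal_mul (by positivity) (Complex.exp_ne_zero _), Complex.log_exp]
    all_goals
      simp only [Complex.mul_im, Complex.ofReal_re, Complex.I_im, mul_one, Complex.ofReal_im,
        Complex.I_re, mul_zero, add_zero]
      linarith [Real.pi_pos]
  rw [integral_gaussian_complex_Ioi hre, hpolar, Complex.cpow_def_of_ne_zero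
    (by simp [hr.ne', Real.pi_ne_zero]), hlog, Real.sqrt_eq_rpow,
    Real.rpow_def_of_pos (by positivity), add_mul, Complex.exp_add]
  push_cast
  ring_nf

lemma sum_Icc_one_cast_div {𝕜 : Type*} [Field 𝕜] [CharZero 𝕜] (k : ℕ) (c : 𝕜) :
    ∑ j ∈ Finset.Icc 1 k, (j : 𝕜) / c = k * (k + 1) / (2 * c) := by
  have hsum : ∑ j ∈ Finset.Icc 1 k, (j : 𝕜) = k * (k + 1) / 2 := by
    induction k with
    | zero => simp
    | succ k ih =>
      rw [Finset.sum_Icc_succ_top (by omega), ih]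
      push_cast
      ring
  rw [← Finset.sum_div, hsum, div_div]

lemma mul_sub_one_le_floor_mul_floor_add_one {x : ℝ} (hx : 0 ≤ x) :
    x * (x - 1) ≤ ⌊x⌋₊ * (⌊x⌋₊ + 1) := by
  have hlt := Nat.lt_floor_add_one x
  nlinarith [mul_nonneg (sub_nonneg.2 hlt.le) (add_nonneg hx (Nat.cast_nonneg (α := ℝ) ⌊x⌋₊))]

lemma tendsto_sqrt_natCast_atTop : Tendsto (fun n : ℕ => √(n : ℝ)) atTop atTop :=
  Real.tendsto_sqrt_atTop.comp tendsto_natCast_atTop_atTop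

section ProductSums

variable {F : ℝ → ℂ} {d : ℂ} {c : ℝ}

lemma tendsto_prod_Icc_div_s8 {k : ℕ → ℕ} {t : ℝ} (hF : HasDerivAt F d 0) (hF0 : F 0 = 1)
    (hk : Tendsto (fun N : ℕ => (k N : ℝ) / √N) atTop (𝓝 t)) :
    Tendsto (fun N : ℕ => ∏ j ∈ Finset.Icc 1 (k N), F ((j : ℝ) / N)) atTop
      (𝓝 (Complex.exp (d * t ^ 2 / 2))) := by
  have hmax : Tendsto (fun N : ℕ => (k N : ℝ) / N) atTop (𝓝 0) :=
    (hk.div_atTop tendsto_sqrt_natCast_atTop).congr fun N => by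
      rw [div_div, Real.mul_self_sqrt N.cast_nonneg]
  have hsum : Tendsto (fun N : ℕ => ∑ j ∈ Finset.Icc 1 (k N), (j : ℝ) / N) atTop
      (𝓝 (t ^ 2 / 2)) := by
    have h := ((hk.pow 2).add hmax).div_const 2
    rw [add_zero] at h
    refine h.congr fun N => ?_
    rw [sum_Icc_one_cast_div, div_pow, Real.sq_sqrt N.cast_nonneg]
    ring
  have hsmall : ∀ U ∈ 𝓝 (0 : ℝ), ∀ᶠ N : ℕ in atTop,
      ∀ j ∈ Finset.Icc 1 (k N), (j : ℝ) / N ∈ U := by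
    intro U hU
    obtain ⟨ε, hε, hball⟩ := Metric.mem_nhds_iff.1 hU
    filter_upwards [hmax.eventually_lt_const hε] with N hN j hj
    have hjk : (j : ℝ) ≤ k N := by exact_mod_cast (Finset.mem_Icc.1 hj).2
    refine hball ?_
    rw [mem_ball_zero_iff, Real.norm_of_nonneg (by positivity)]
    exact lt_of_le_of_lt (by gcongr) hN
  have hbdd : ∀ᶠ N : ℕ in atTop, ∑ j ∈ Finset.Icc 1 (k N), ‖(j : ℝ) / N‖ ≤ t ^ 2 / 2 + 1 := by
    filter_upwards [hsum.eventually_le_const (lt_add_one _)] with N hN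
    simpa using hN
  convert tendsto_prod_of_hasFDerivAt hF.hasFDerivAt hF0 hsmall hbdd hsum using 3
  simp only [ContinuousLinearMap.toSpanSingleton_apply, Complex.real_smul, Complex.ofReal_div,
    Complex.ofReal_pow, Complex.ofReal_ofNat]
  ring

lemma norm_prod_Icc_div_le (hle : ∀ y ∈ Set.Icc (0 : ℝ) 1, ‖F y‖ ≤ Real.exp (-(c * y)))
    {N k : ℕ} (hk : k ≤ N) :
    ‖∏ j ∈ Finset.Icc 1 k, F ((j : ℝ) / N)‖ ≤ Real.exp (-(c * (k * (k + 1) / (2 * N)))) := by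
  rw [norm_prod, ← sum_Icc_one_cast_div, Finset.mul_sum, ← Finset.sum_neg_distrib, Real.exp_sum]
  refine Finset.prod_le_prod (fun _ _ => norm_nonneg _) fun j hj => hle _ ⟨by positivity, ?_⟩
  exact div_le_one_of_le₀ (by exact_mod_cast (Finset.mem_Icc.1 hj).2.trans hk) N.cast_nonneg

lemma norm_prod_Icc_floor_div_le (hc : 0 ≤ c)
    (hle : ∀ y ∈ Set.Icc (0 : ℝ) 1, ‖F y‖ ≤ Real.exp (-(c * y)))
    {N : ℕ} {t : ℝ} (ht : 0 ≤ t) (htN : √N * t < N) :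
    ‖∏ j ∈ Finset.Icc 1 ⌊√N * t⌋₊, F ((j : ℝ) / N)‖ ≤
      Real.exp (c / 4) * Real.exp (-(c / 4) * t ^ 2) := by
  have hN : (0 : ℝ) < N := (by positivity : 0 ≤ √N * t).trans_lt htN
  have hN1 : (1 : ℝ) ≤ √N := Real.one_le_sqrt.2 (by exact_mod_cast hN)
  have hfloor : (t ^ 2 - 1) / 4 ≤ (⌊√N * t⌋₊ * (⌊√N * t⌋₊ + 1) : ℝ) / (2 * N) := by
    calc (t ^ 2 - 1) / 4 ≤ (t ^ 2 - t) / 2 := by nlinarith [sq_nonneg (t - 1)]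
      _ ≤ √N * t * (√N * t - 1) / (2 * √N ^ 2) := by
        rw [div_le_div_iff₀ two_pos (by positivity)]
        nlinarith [mul_nonneg (mul_nonneg (Real.sqrt_nonneg N) ht) (sub_nonneg.2 hN1)]
      _ ≤ _ := by
        rw [Real.sq_sqrt hN.le]
        exact div_le_div_of_nonneg_right
          (mul_sub_one_le_floor_mul_floor_add_one (by positivity)) (by positivity)
  refine (norm_prod_Icc_div_le hle (Nat.floor_le_of_le htN.le)).trans ?_
  rw [← Real.exp_add]
  exact Real.exp_le_exp.2 (by nlinarith [mul_le_mul_of_nonneg_left hfloor hc])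

theorem tendsto_sum_prod_Icc_div_sqrt (hc : 0 < c) (hF : HasDerivAt F d 0) (hF0 : F 0 = 1)
    (hle : ∀ y ∈ Set.Icc (0 : ℝ) 1, ‖F y‖ ≤ Real.exp (-(c * y))) :
    Tendsto (fun N : ℕ =>
        (∑ k ∈ Finset.range N, ∏ j ∈ Finset.Icc 1 k, F ((j : ℝ) / N)) / (√(N : ℝ) : ℂ))
      atTop (𝓝 (∫ t in Set.Ioi (0 : ℝ), Complex.exp (d * t ^ 2 / 2))) := by
  have hbound : IntegrableOn (fun t : ℝ => Real.exp (c / 4) * Real.exp (-(c / 4) * t ^ 2))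
      (Set.Ioi 0) :=
    ((integrable_exp_neg_mul_sq (by positivity)).const_mul _).integrableOn
  have hlim (t : ℝ) (ht : 0 < t) : Tendsto
      (fun N : ℕ => ∏ j ∈ Finset.Icc 1 ⌊√N * t⌋₊, F ((j : ℝ) / N)) atTop
      (𝓝 (Complex.exp (d * t ^ 2 / 2))) := by
    refine tendsto_prod_Icc_div_s8 hF hF0 ?_
    simpa only [Function.comp_def, mul_comm t] using
      (tendsto_nat_floor_mul_div_atTop ht.le).comp tendsto_sqrt_natCast_atTop
  have hdiv : Tendsto (fun N : ℕ => (N : ℝ) / √N) atTop atTop := by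
    simpa only [Real.div_sqrt] using tendsto_sqrt_natCast_atTop
  refine (tendsto_inv_smul_sum_range_of_dominated (n := fun N => N)
    (f := fun (N : ℕ) k => ∏ j ∈ Finset.Icc 1 k, F ((j : ℝ) / N)) hdiv hbound
    (.of_forall fun N t ht htN => norm_prod_Icc_floor_div_le hc.le hle ht.le htN)
    hlim).congr fun N => ?_
  rw [Complex.real_smul, Complex.ofReal_inv, div_eq_inv_mul]

end ProductSums

/-- The function `F y = e^{-θ} (1 - e^{(y-1)θ})`, whose values at `y = j/N` are the factors of the
Habiro–Lê formula once the power `e^{-kθ}` is distributed over the `k` factors of the product. -/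
noncomputable def trefoilFactor (θ : ℂ) (y : ℝ) : ℂ :=
  Complex.exp (-θ) * (1 - Complex.exp ((y - 1) * θ))

lemma trefoilJones_eq_sum_prod_trefoilFactor (N : ℕ) (θ : ℂ) :
    trefoilJones N θ = Complex.exp ((1 - N) * θ / N) *
      ∑ k ∈ Finset.range N, ∏ j ∈ Finset.Icc 1 k, trefoilFactor θ ((j : ℝ) / N) := by
  rw [trefoilJones]
  congr 1
  refine Finset.sum_congr rfl fun k hk => ?_
  have hN : (N : ℂ) ≠ 0 := by
    have := Finset.mem_range.1 hk
    exact_mod_cast (by omega : N ≠ 0)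
  simp only [trefoilFactor, Finset.prod_mul_distrib, Finset.prod_const, Nat.card_Icc,
    Nat.add_sub_cancel, ← Complex.exp_nat_mul, mul_neg, neg_mul]
  congr! 4 with j
  push_cast
  field_simp

lemma trefoilFactor_zero {θ : ℂ} (hθ : Complex.exp θ - 1 + Complex.exp (-θ) = 0) :
    trefoilFactor θ 0 = 1 := by
  have hinv : Complex.exp θ * Complex.exp (-θ) = 1 := by
    rw [← Complex.exp_add, add_neg_cancel, Complex.exp_zero]
  rw [trefoilFactor, Complex.ofReal_zero, zero_sub, neg_one_mul]
  linear_combination -Complex.exp (-θ) * hθ + hinv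

lemma hasDerivAt_trefoilFactor (θ : ℂ) (y : ℝ) :
    HasDerivAt (trefoilFactor θ) (-θ * Complex.exp ((y - 2) * θ)) y := by
  have hlin : HasDerivAt (fun u : ℝ => ((u : ℂ) - 1) * θ) (1 * θ) y :=
    (Complex.ofRealCLM.hasDerivAt.sub_const 1).mul_const θ
  refine ((hlin.cexp.const_sub 1).const_mul (Complex.exp (-θ))).congr_deriv ?_
  rw [show ((y : ℂ) - 2) * θ = -θ + (y - 1) * θ by ring, Complex.exp_add]
  ring

lemma norm_trefoilFactor_mul_I (α y : ℝ) :
    ‖trefoilFactor (α * Complex.I) y‖ = |2 * Real.sin (α * (1 - y) / 2)| := by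
  rw [trefoilFactor, norm_mul, ← neg_mul, ← Complex.ofReal_neg, Complex.norm_exp_ofReal_mul_I,
    one_mul, norm_sub_rev,
    show ((y : ℂ) - 1) * (α * Complex.I) = Complex.I * ((-(α * (1 - y)) : ℝ) : ℂ) by
      push_cast; ring,
    Complex.norm_exp_I_mul_ofReal_sub_one, neg_div, Real.sin_neg, mul_neg, norm_neg,
    Real.norm_eq_abs]

lemma tendsto_exp_one_sub_mul_div (θ : ℂ) :
    Tendsto (fun N : ℕ => Complex.exp ((1 - N) * θ / N)) atTop (𝓝 (Complex.exp (-θ))) := by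
  have hlim : Tendsto (fun N : ℕ => θ / (N : ℂ) - θ) atTop (𝓝 (0 - θ)) :=
    (tendsto_const_div_atTop_nhds_zero_nat θ).sub_const θ
  rw [zero_sub] at hlim
  refine ((Complex.continuous_exp.tendsto _).comp hlim).congr' ?_
  filter_upwards [eventually_ne_atTop 0] with N hN
  rw [Function.comp_apply]
  congr 1
  field_simp

theorem tendsto_trefoilJones_div_sqrt {θ : ℂ} {c : ℝ} (hc : 0 < c)
    (hθ : Complex.exp θ - 1 + Complex.exp (-θ) = 0)
    (hle : ∀ y ∈ Set.Icc (0 : ℝ) 1, ‖trefoilFactor θ y‖ ≤ Real.exp (-(c * y))) :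
    Tendsto (fun N : ℕ => trefoilJones N θ / (√(N : ℝ) : ℂ)) atTop
      (𝓝 (Complex.exp (-θ) *
        ∫ t in Set.Ioi (0 : ℝ), Complex.exp (-θ * Complex.exp (-2 * θ) * t ^ 2 / 2))) := by
  have hderiv : HasDerivAt (trefoilFactor θ) (-θ * Complex.exp (-2 * θ)) 0 := by
    simpa using hasDerivAt_trefoilFactor θ 0
  refine ((tendsto_exp_one_sub_mul_div θ).mul
    (tendsto_sum_prod_Icc_div_sqrt hc hderiv (trefoilFactor_zero hθ) hle)).congr fun N => ?_
  rw [trefoilJones_eq_sum_prod_trefoilFactor]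
  exact (mul_div_assoc _ _ _).symm

lemma exp_sub_one_add_exp_neg_pi_div_three_mul_I :
    Complex.exp (π / 3 * Complex.I) - 1 + Complex.exp (-(π / 3 * Complex.I)) = 0 := by
  have hcos : Complex.cos (π / 3) = 1 / 2 := by
    rw [show (π / 3 : ℂ) = ((π / 3 : ℝ) : ℂ) by push_cast; rfl, ← Complex.ofReal_cos,
      Real.cos_pi_div_three]
    norm_num
  have h := Complex.two_cos (π / 3)
  rw [hcos, neg_mul] at h
  linear_combination -h

lemma two_mul_sin_pi_div_six_mul_one_sub_le_exp {y : ℝ} (hy : y ∈ Set.Icc (0 : ℝ) 1) :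
    2 * Real.sin (π / 6 * (1 - y)) ≤ Real.exp (-(1 / 2 * y)) := by
  obtain ⟨hy0, hy1⟩ := hy
  have hpi := Real.pi_pos
  have hsub : 2 * Real.sin (π / 6 * (1 - y)) =
      Real.cos (π / 6 * y) - √3 * Real.sin (π / 6 * y) := by
    rw [mul_one_sub, Real.sin_sub, Real.cos_pi_div_six, Real.sin_pi_div_six]
    ring
  have hjordan : y / 3 ≤ Real.sin (π / 6 * y) := by
    convert Real.mul_le_sin (x := π / 6 * y) (by positivity) (by nlinarith) using 1
    field_simp
    ring
  have hsqrt : (3 / 2 : ℝ) ≤ √3 := Real.le_sqrt_of_sq_le (by norm_num)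
  calc 2 * Real.sin (π / 6 * (1 - y))
      = Real.cos (π / 6 * y) - √3 * Real.sin (π / 6 * y) := hsub
    _ ≤ 1 - 3 / 2 * (y / 3) := by gcongr; exact Real.cos_le_one _
    _ = -(1 / 2 * y) + 1 := by ring
    _ ≤ Real.exp (-(1 / 2 * y)) := Real.add_one_le_exp _

lemma norm_trefoilFactor_pi_div_three_mul_I_le {y : ℝ} (hy : y ∈ Set.Icc (0 : ℝ) 1) :
    ‖trefoilFactor (π / 3 * Complex.I) y‖ ≤ Real.exp (-(1 / 2 * y)) := by
  have hsin : 0 ≤ Real.sin (π / 6 * (1 - y)) :=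
    Real.sin_nonneg_of_nonneg_of_le_pi (mul_nonneg (by positivity) (sub_nonneg.2 hy.2))
      (by nlinarith [Real.pi_pos, hy.1])
  rw [show (π / 3 * Complex.I : ℂ) = ((π / 3 : ℝ) : ℂ) * Complex.I by push_cast; rfl,
    norm_trefoilFactor_mul_I, show π / 3 * (1 - y) / 2 = π / 6 * (1 - y) by ring,
    abs_of_nonneg (by positivity)]
  exact two_mul_sin_pi_div_six_mul_one_sub_le_exp hy

lemma integral_gaussian_pi_div_three_mul_I_Ioi :
    ∫ t in Set.Ioi (0 : ℝ), Complex.exp (-(π / 3 * Complex.I) *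
      Complex.exp (-2 * (π / 3 * Complex.I)) * t ^ 2 / 2) =
      √(3 / 2) * Complex.exp (π / 12 * Complex.I) := by
  have hpolar : Complex.I * Complex.exp (-2 * (π / 3 * Complex.I)) =
      Complex.exp (-(π / 6 : ℝ) * Complex.I) := by
    nth_rw 1 [← Complex.exp_pi_div_two_mul_I, ← Complex.exp_add]
    congr 1
    push_cast
    ring
  have hsqrt : √(π / (π / 6)) / 2 = √(3 / 2) := by
    rw [div_div_cancel₀ Real.pi_ne_zero, show (6 : ℝ) = 2 ^ 2 * (3 / 2) by norm_num,
      Real.sqrt_mul (by norm_num), Real.sqrt_sq two_pos.le, mul_div_cancel_left₀ _ two_ne_zero]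
  have hφ : |π / 6| < π / 2 := by
    rw [abs_of_pos (by positivity)]
    linarith [Real.pi_pos]
  convert integral_exp_neg_polar_mul_sq_Ioi (r := π / 6) (by positivity) hφ using 1
  · congr! 3 with t
    rw [← hpolar]
    push_cast
    ring
  · rw [← hsqrt]
    push_cast
    ring_nf

/-- (Hikami–Murakami, case of the trefoil.) At `θ₀ = πi/3 = 2πi/6`, `e^{θ₀}` is a zero of
the Alexander polynomial of the trefoil and
`lim_{N→∞} J_N(T; e^{θ₀/N})/N^{1/2} = e^{−πi/4}·√(3/2)`. -/
theorem trefoil_polynomial_growth :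
    Filter.Tendsto
      (fun N : ℕ =>
        trefoilJones N (Real.pi * Complex.I / 3) / (Real.sqrt (N : ℝ) : ℂ))
      Filter.atTop
      (nhds (Complex.exp (-(Real.pi * Complex.I) / 4) *
        (Real.sqrt (3 / 2) : ℂ))) := by
  have hθ : (π * Complex.I / 3 : ℂ) = π / 3 * Complex.I := by ring
  have hlim := tendsto_trefoilJones_div_sqrt one_half_pos
    exp_sub_one_add_exp_neg_pi_div_three_mul_I
    fun _ hy => norm_trefoilFactor_pi_div_three_mul_I_le hy
  have hphase : Complex.exp (-(π / 3 * Complex.I)) * (√(3 / 2) * Complex.exp (π / 12 * Complex.I)) =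
      Complex.exp (-(π * Complex.I) / 4) * √(3 / 2) := by
    rw [mul_left_comm, ← Complex.exp_add, mul_comm]
    ring_nf
  rwa [integral_gaussian_pi_div_three_mul_I_Ioi, hphase, ← hθ] at hlim
end

section
/- (Riley-type normal form for non-abelian SL(2,ℂ) representations of the figure-eight knot group.) Let m, d, s ∈ ℂ with m ≠ 0 and s² = m, and let X = [[s,1],[0,s⁻¹]], Y = [[s,0],[−d,s⁻¹]] ∈ SL(2,ℂ), with ω := X·Y⁻¹·X⁻¹·Y. Then the relation of the figure-eight knot group presentation ⟨x,y | ωx = yω⟩ is satisfied, i.e. ω·X = Y·ω as matrices, if and only if d² + (3 − m − m⁻¹)·d + (3 − m − m⁻¹) = 0. -/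
open Matrix

/-!
Riley's observation: if the lower left entry of `W` is `-d` times its upper right entry `b`, then
`W X - Y W = [[0, r], [d r, 0]]` with `r = W₁₁ + (s⁻¹ - s) b`, so the matrix relation reduces to the
single equation `r = 0`. The word `ω` has this symmetry, and for it `r` is the quadratic in `d`.
-/

/-- The word `ω = x y⁻¹ x⁻¹ y` in the presentation `⟨x, y ∣ ω x = y ω⟩` of the figure-eight knot
group, for elements of a group or for square matrices, whose inverse is zero unless the determinant
is a unit. -/
def figureEightWord {G : Type*} [DivInvMonoid G] (x y : G) : G :=
  x * y⁻¹ * x⁻¹ * y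

section Riley

variable {R : Type*} [CommRing R] (s : Rˣ) (d : R)

/-- The image of the first meridian in Riley's normal form. The eigenvalue `s` is a unit, so that
the matrix has determinant one over any commutative ring. -/
def rileyX : Matrix (Fin 2) (Fin 2) R :=
  !![(s : R), 1; 0, ↑s⁻¹]

/-- The image of the second meridian in Riley's normal form; `d` is the parameter that remains
after conjugating the first meridian to `rileyX s`. -/
def rileyY : Matrix (Fin 2) (Fin 2) R :=
  !![(s : R), 0; -d, ↑s⁻¹]

lemma inv_rileyX : (rileyX s)⁻¹ = !![↑s⁻¹, -1; 0, (s : R)] := by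
  apply inv_eq_right_inv
  simp [rileyX, one_fin_two]

lemma inv_rileyY : (rileyY s d)⁻¹ = !![↑s⁻¹, 0; d, (s : R)] := by
  apply inv_eq_right_inv
  simp [rileyY, one_fin_two, mul_comm]

lemma rileyX_mul_inv_rileyY :
    rileyX s * (rileyY s d)⁻¹ = !![1 + d, (s : R); ↑s⁻¹ * d, 1] := by
  simp [inv_rileyY, rileyX]

lemma inv_rileyX_mul_rileyY :
    (rileyX s)⁻¹ * rileyY s d = !![1 + d, -↑s⁻¹; -(s * d), 1] := by
  simp [inv_rileyX, rileyY]

lemma figureEightWord_rileyX_rileyY :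
    figureEightWord (rileyX s) (rileyY s d) =
      !![(1 + d) ^ 2 - s ^ 2 * d, s - ↑s⁻¹ * (1 + d);
        -(d * (s - ↑s⁻¹ * (1 + d))), 1 - ↑s⁻¹ ^ 2 * d] := by
  rw [figureEightWord, mul_assoc, rileyX_mul_inv_rileyY, inv_rileyX_mul_rileyY]
  ext i j
  fin_cases i <;> fin_cases j <;> simp <;> ring

lemma mul_rileyX_eq_rileyY_mul_iff (a b e : R) :
    !![a, b; -(d * b), e] * rileyX s = rileyY s d * !![a, b; -(d * b), e] ↔
      a + (↑s⁻¹ - s) * b = 0 := by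
  have hsub : !![a, b; -(d * b), e] * rileyX s - rileyY s d * !![a, b; -(d * b), e] =
      (a + (↑s⁻¹ - s) * b) • !![0, 1; d, 0] := by
    ext i j
    fin_cases i <;> fin_cases j <;> simp [rileyX, rileyY] <;> ring
  rw [← sub_eq_zero, hsub]
  refine ⟨fun h => ?_, fun h => by rw [h, zero_smul]⟩
  simpa using congr_fun₂ h 0 1

theorem fig8_Riley_representation_general {m : Rˣ} (hs : s ^ 2 = m) :
    figureEightWord (rileyX s) (rileyY s d) * rileyX s =
        rileyY s d * figureEightWord (rileyX s) (rileyY s d) ↔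
      d ^ 2 + (3 - m - ↑m⁻¹) * d + (3 - m - ↑m⁻¹) = 0 := by
  have hs_inv : (s : R) * ↑s⁻¹ = 1 := s.mul_inv
  have riley_polynomial : (1 + d) ^ 2 - s ^ 2 * d + (↑s⁻¹ - s) * (s - ↑s⁻¹ * (1 + d)) =
      d ^ 2 + (3 - m - ↑m⁻¹) * d + (3 - m - ↑m⁻¹) := by
    rw [← hs, ← inv_pow, Units.val_pow_eq_pow_val, Units.val_pow_eq_pow_val]
    linear_combination (2 + d) * hs_inv
  rw [figureEightWord_rileyX_rileyY, mul_rileyX_eq_rileyY_mul_iff, riley_polynomial]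

end Riley

/-- (Riley-type normal form for non-abelian `SL(2,ℂ)` representations of the
figure-eight knot group.) With `X = [[s,1],[0,s⁻¹]]`, `Y = [[s,0],[−d,s⁻¹]]`, `s² = m`,
and `ω = X Y⁻¹ X⁻¹ Y`, the relation `ω X = Y ω` of the presentation `⟨x,y ∣ ωx = yω⟩`
holds iff `d² + (3 − m − m⁻¹)d + (3 − m − m⁻¹) = 0`. -/
theorem fig8_Riley_representation (m d s : ℂ) (hm : m ≠ 0) (hs : s ^ 2 = m)
    (X Y ω : Matrix (Fin 2) (Fin 2) ℂ)
    (hX : X = !![s, 1; 0, s⁻¹]) (hY : Y = !![s, 0; -d, s⁻¹])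
    (hω : ω = X * Y⁻¹ * X⁻¹ * Y) :
    ω * X = Y * ω ↔ d ^ 2 + (3 - m - m⁻¹) * d + (3 - m - m⁻¹) = 0 := by
  subst hX hY hω hs
  lift s to ℂˣ using (isUnit_pow_iff two_ne_zero).mp hm.isUnit
  simpa [figureEightWord, rileyX, rileyY] using fig8_Riley_representation_general s d rfl
end

section
/- (Non-abelian SL(2,ℂ) representations of the trefoil knot group.) Let m, d, s ∈ ℂ with m ≠ 0 and s² = m, and let X = [[s,1],[0,s⁻¹]], Y = [[s,0],[−d,s⁻¹]] ∈ SL(2,ℂ), with ω := X·Y. Then the relation of the trefoil knot group presentation ⟨x,y | ωx = yω⟩ is satisfied, i.e. (X·Y)·X = Y·(X·Y) as matrices, if and only if d = m + m⁻¹ − 1. In particular, m uniquely determines the non-abelian representation in this normal form. -/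
/-!
A `2 × 2` matrix `A` satisfies `A + adj A = tr A • 1`. For the product `A * B` this becomes, after
multiplication by `A` on the right, `A * B * A = tr (A * B) • A - det A • adj B`. If `A` and `B`
have the same trace and determinant, exchanging them and subtracting gives
`A * B * A - B * A * B = (tr (A * B) - det A) • (A - B)`, so the braid relation becomes the
scalar equation `tr (A * B) = det A` as soon as some entry of `A - B` is regular. For `X` and `Y`
that entry is the `1` in the corner, and the scalar equation is linear in `d`.
-/

open Matrix

section FinTwo

variable {R : Type*} [CommRing R] (A B : Matrix (Fin 2) (Fin 2) R)

theorem add_adjugate_fin_two :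
    A + A.adjugate = A.trace • (1 : Matrix (Fin 2) (Fin 2) R) := by
  rw [adjugate_fin_two, trace_fin_two]
  ext i j
  fin_cases i <;> fin_cases j <;> simp [add_comm]

theorem mul_mul_self_fin_two : A * B * A = (A * B).trace • A - A.det • B.adjugate := by
  rw [eq_sub_iff_add_eq]
  calc A * B * A + A.det • B.adjugate
      = (A * B + (A * B).adjugate) * A := by
        rw [add_mul, adjugate_mul_distrib, mul_assoc B.adjugate, adjugate_mul, mul_smul_one]
    _ = (A * B).trace • A := by rw [add_adjugate_fin_two, smul_one_mul]

variable {A B}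

theorem braid_sub_braid_fin_two (htr : A.trace = B.trace) (hdet : A.det = B.det) :
    A * B * A - B * A * B = ((A * B).trace - A.det) • (A - B) := by
  have hadj : B.adjugate - A.adjugate = A - B := by
    rw [sub_eq_sub_iff_add_eq_add, add_comm, add_adjugate_fin_two, add_adjugate_fin_two, htr]
  calc A * B * A - B * A * B
      = (A * B).trace • (A - B) - A.det • (B.adjugate - A.adjugate) := by
        rw [mul_mul_self_fin_two A B, mul_mul_self_fin_two B A, trace_mul_comm B A, ← hdet]
        module
    _ = ((A * B).trace - A.det) • (A - B) := by rw [hadj, sub_smul]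

theorem braid_iff_trace_mul_eq_det_fin_two (htr : A.trace = B.trace) (hdet : A.det = B.det)
    {i j : Fin 2} (hij : IsRightRegular (A i j - B i j)) :
    A * B * A = B * A * B ↔ (A * B).trace = A.det := by
  rw [← sub_eq_zero, braid_sub_braid_fin_two htr hdet, ← sub_eq_zero (b := A.det)]
  refine ⟨fun h => ?_, fun h => by rw [h, zero_smul]⟩
  have hentry : ((A * B).trace - A.det) * (A i j - B i j) = 0 := by
    simpa using congr_fun₂ h i j
  exact hij.mul_right_eq_zero_iff.mp hentry

theorem trefoil_representation_general {s t d : R} {X Y : Matrix (Fin 2) (Fin 2) R}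
    (hX : X = !![s, 1; 0, t]) (hY : Y = !![s, 0; -d, t]) :
    X * Y * X = Y * (X * Y) ↔ d = s ^ 2 + t ^ 2 - s * t := by
  have htr : X.trace = Y.trace := by rw [hX, hY, trace_fin_two_of, trace_fin_two_of]
  have hdetX : X.det = s * t := by simp [hX]
  have hdetY : Y.det = s * t := by simp [hY]
  have htrXY : (X * Y).trace = s ^ 2 + t ^ 2 - d := by
    rw [hX, hY, mul_fin_two, trace_fin_two_of]
    ring
  have hcorner : IsRightRegular (X 0 1 - Y 0 1) := by
    simpa [hX, hY] using (isRegular_one (R := R)).right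
  rw [← mul_assoc, braid_iff_trace_mul_eq_det_fin_two htr (hdetX.trans hdetY.symm) hcorner,
    htrXY, hdetX, sub_eq_iff_eq_add', eq_comm (a := d), sub_eq_iff_eq_add]

end FinTwo

/-- (Non-abelian `SL(2,ℂ)` representations of the trefoil knot group.)
With `X = [[s,1],[0,s⁻¹]]`, `Y = [[s,0],[−d,s⁻¹]]`, `s² = m`, and `ω = XY`, the relation
`ω X = Y ω` of the presentation `⟨x,y ∣ ωx = yω⟩`, i.e. `XYX = YXY`, holds iff
`d = m + m⁻¹ − 1`; in particular `m` uniquely determines the representation. -/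
theorem trefoil_representation (m d s : ℂ) (hm : m ≠ 0) (hs : s ^ 2 = m)
    (X Y : Matrix (Fin 2) (Fin 2) ℂ)
    (hX : X = !![s, 1; 0, s⁻¹]) (hY : Y = !![s, 0; -d, s⁻¹]) :
    X * Y * X = Y * (X * Y) ↔ d = m + m⁻¹ - 1 := by
  have hs₀ : s ≠ 0 := ne_zero_pow two_ne_zero (hs ▸ hm)
  rw [trefoil_representation_general hX hY, mul_inv_cancel₀ hs₀, inv_pow, hs]
end

section
/- (Image of the longitude of the trefoil.) Let m, s ∈ ℂ with m ≠ 0, s² = m, and s ≠ s⁻¹ (i.e. m ≠ 1), and set d := m + m⁻¹ − 1, X = [[s,1],[0,s⁻¹]], Y = [[s,0],[−d,s⁻¹]]. Then the image of the longitude λ = yx²yx⁻⁴ is Y·X·X·Y·(X⁻¹)⁴ = [[−m⁻³, (m³ − m⁻³)/(s − s⁻¹)],[0, −m³]]. -/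
open Matrix

/-!
In the trefoil group the longitude equals `(yx)³x⁻⁶`, and `(yx)³` is central. Two matrices of
determinant `1` with equal traces whose product has trace `1` satisfy the braid relation, and by
Cayley–Hamilton that product cubes to `-1`. So the longitude goes to `-X⁻⁶`, and the powers of the
triangular matrix `X⁻¹` are given by geometric sums.
-/

theorem mul_mul_pow_four_eq_pow_three_mul_of_braid {M : Type*} [Monoid M] {x y z : M}
    (braid : x * y * x = y * x * y) (hxz : x * z = 1) :
    y * x * x * y * z ^ 4 = (y * x) ^ 3 * z ^ 6 := by
  have cube : (y * x) ^ 3 = y * x * x * y * x ^ 2 :=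
    calc (y * x) ^ 3 = y * x * (y * x * y) * x := by
          simp only [pow_succ, pow_zero, one_mul, mul_assoc]
      _ = y * x * (x * y * x) * x := by rw [braid]
      _ = y * x * x * y * x ^ 2 := by simp only [sq, mul_assoc]
  have cancel : x ^ 2 * z ^ 2 = 1 := pow_mul_pow_eq_one 2 hxz
  calc y * x * x * y * z ^ 4 = y * x * x * y * (x ^ 2 * z ^ 2) * z ^ 4 := by
        rw [cancel, mul_one]
    _ = (y * x) ^ 3 * z ^ 6 := by rw [cube, pow_add z 2 4]; simp only [mul_assoc]

section FinTwo

variable {R : Type*} [CommRing R] {A B : Matrix (Fin 2) (Fin 2) R}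

/- For invertible `B` this is Cayley–Hamilton for `A * B`, multiplied by `B⁻¹`. -/
theorem mul_mul_self_eq_trace_smul_sub_det_smul_adjugate (A B : Matrix (Fin 2) (Fin 2) R) :
    A * B * A = (A * B).trace • A - A.det • B.adjugate := by
  rw [eta_fin_two A, eta_fin_two B]
  ext i j
  fin_cases i <;> fin_cases j <;> simp [trace_fin_two, det_fin_two, adjugate_fin_two] <;> ring

theorem sq_eq_trace_smul_sub_det_smul_one (A : Matrix (Fin 2) (Fin 2) R) :
    A ^ 2 = A.trace • A - A.det • (1 : Matrix (Fin 2) (Fin 2) R) := by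
  simpa [sq] using mul_mul_self_eq_trace_smul_sub_det_smul_adjugate A 1

theorem adjugate_eq_trace_smul_one_sub (A : Matrix (Fin 2) (Fin 2) R) :
    A.adjugate = A.trace • (1 : Matrix (Fin 2) (Fin 2) R) - A := by
  have h := mul_mul_self_eq_trace_smul_sub_det_smul_adjugate 1 A
  simp only [one_mul, mul_one, det_one, one_smul] at h
  exact eq_sub_of_add_eq' (eq_sub_iff_add_eq.mp h)

theorem pow_three_eq_neg_one_of_trace_eq_one (hdet : A.det = 1) (htr : A.trace = 1) :
    A ^ 3 = -1 := by
  have hsq : A ^ 2 = A - 1 := by simpa [hdet, htr] using sq_eq_trace_smul_sub_det_smul_one A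
  calc A ^ 3 = A ^ 2 * A := pow_succ A 2
    _ = A ^ 2 - A := by rw [hsq, sub_mul, one_mul, ← sq, hsq]
    _ = -1 := by rw [hsq]; abel

theorem braid_of_trace_mul_eq_one (hA : A.det = 1) (hB : B.det = 1) (htr : A.trace = B.trace)
    (hAB : (A * B).trace = 1) : A * B * A = B * A * B := by
  have hBA : (B * A).trace = 1 := by rw [trace_mul_comm, hAB]
  rw [mul_mul_self_eq_trace_smul_sub_det_smul_adjugate A B,
    mul_mul_self_eq_trace_smul_sub_det_smul_adjugate B A, hA, hB, hAB, hBA,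
    adjugate_eq_trace_smul_one_sub, adjugate_eq_trace_smul_one_sub, htr]
  simp only [one_smul]
  abel

theorem longitude_eq_neg_inv_pow_six (hA : A.det = 1) (hB : B.det = 1) (htr : A.trace = B.trace)
    (hAB : (A * B).trace = 1) : B * A * A * B * A⁻¹ ^ 4 = -A⁻¹ ^ 6 := by
  have inv : A * A⁻¹ = 1 := mul_nonsing_inv A (by simp [hA])
  have cube : (B * A) ^ 3 = -1 :=
    pow_three_eq_neg_one_of_trace_eq_one (by rw [det_mul, hA, hB, one_mul])
      (by rw [trace_mul_comm, hAB])
  rw [mul_mul_pow_four_eq_pow_three_mul_of_braid (braid_of_trace_mul_eq_one hA hB htr hAB) inv,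
    cube, neg_one_mul]

theorem inv_upperTriangular_fin_two {a c : R} (b : R) (hac : a * c = 1) :
    !![a, b; 0, c]⁻¹ = !![c, -b; 0, a] := by
  rw [inv_def, det_fin_two_of, adjugate_fin_two_of, mul_zero, sub_zero, hac, Ring.inverse_one,
    one_smul, neg_zero]

theorem upperTriangular_fin_two_pow (a b c : R) (n : ℕ) :
    !![a, b; 0, c] ^ n =
      !![a ^ n, b * ∑ i ∈ Finset.range n, a ^ i * c ^ (n - 1 - i); 0, c ^ n] := by
  induction n with
  | zero => simp [one_fin_two]
  | succ n ih =>
    have sum_succ : ∑ i ∈ Finset.range (n + 1), a ^ i * c ^ (n - i) =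
        a ^ n + c * ∑ i ∈ Finset.range n, a ^ i * c ^ (n - 1 - i) :=
      geom_sum₂_succ_eq a c
    have entry (S : R) : a ^ n * b + b * S * c = b * (a ^ n + c * S) := by ring
    rw [pow_succ, ih, mul_fin_two, Nat.add_sub_cancel, sum_succ, entry]
    simp only [mul_zero, add_zero, zero_mul, zero_add, pow_succ]

end FinTwo

section Field

variable {K : Type*} [Field K]

theorem upperTriangular_fin_two_pow_of_ne {a c : K} (b : K) (hac : a ≠ c) (n : ℕ) :
    !![a, b; 0, c] ^ n = !![a ^ n, b * ((a ^ n - c ^ n) / (a - c)); 0, c ^ n] := by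
  rw [upperTriangular_fin_two_pow, geom₂_sum hac]

theorem trefoil_longitude_general (m d s : K) (hs : s ^ 2 = m) (hss : s ≠ s⁻¹)
    (hd : d = m + m⁻¹ - 1) (X Y : Matrix (Fin 2) (Fin 2) K)
    (hX : X = !![s, 1; 0, s⁻¹]) (hY : Y = !![s, 0; -d, s⁻¹]) :
    Y * X * X * Y * (X⁻¹) ^ 4 =
      !![-(m ^ 3)⁻¹, (m ^ 3 - (m ^ 3)⁻¹) / (s - s⁻¹); 0, -(m ^ 3)] := by
  have hs0 : s ≠ 0 := by
    rintro rfl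
    exact hss inv_zero.symm
  have detX : X.det = 1 := by simp [hX, det_fin_two, hs0]
  have detY : Y.det = 1 := by simp [hY, det_fin_two, hs0]
  have traces : X.trace = Y.trace := by simp [hX, hY, trace_fin_two]
  have traceXY : (X * Y).trace = 1 := by
    rw [hX, hY, hd, ← hs, mul_fin_two, trace_fin_two_of]
    ring
  have hm : m ^ 3 = s ^ 6 := by rw [← hs, ← pow_mul]
  have entry : (s⁻¹ ^ 6 - s ^ 6) / (s⁻¹ - s) = (s ^ 6 - (s ^ 6)⁻¹) / (s - s⁻¹) := by
    rw [inv_pow, ← neg_sub, ← neg_sub s, neg_div_neg_eq]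
  rw [longitude_eq_neg_inv_pow_six detX detY traces traceXY, hX,
    inv_upperTriangular_fin_two 1 (mul_inv_cancel₀ hs0),
    upperTriangular_fin_two_pow_of_ne (-1) hss.symm, entry, hm]
  simp

end Field

/-- (Image of the longitude of the trefoil.) With `X = [[s,1],[0,s⁻¹]]`,
`Y = [[s,0],[−d,s⁻¹]]`, `s² = m ≠ 1`, and `d = m + m⁻¹ − 1`, the image of the longitude
`λ = yx²yx⁻⁴` is `Y X X Y (X⁻¹)⁴ = [[−m⁻³, (m³ − m⁻³)/(s − s⁻¹)],[0, −m³]]`. -/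
theorem trefoil_longitude (m d s : ℂ) (hm : m ≠ 0) (hs : s ^ 2 = m)
    (hss : s ≠ s⁻¹) (hd : d = m + m⁻¹ - 1)
    (X Y : Matrix (Fin 2) (Fin 2) ℂ)
    (hX : X = !![s, 1; 0, s⁻¹]) (hY : Y = !![s, 0; -d, s⁻¹]) :
    Y * X * X * Y * (X⁻¹) ^ 4 =
      !![-(m ^ 3)⁻¹, (m ^ 3 - (m ^ 3)⁻¹) / (s - s⁻¹); 0, -(m ^ 3)] :=
  trefoil_longitude_general m d s hs hss hd X Y hX hY
end
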